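/- The number of standard Young tableaux of truncated shape n^m \ δ_k (an m×n rectangle with the staircase δ_k = (k, k-1, ..., 1) removed from its upper right corner), for n <= m, equals binom(mn - binom(k+1,2), m(n-k-1)) * f_{(n-k-1)^m} * g_{(m, m-1, ..., m-k)} * E_1(k+1, m, n-k-1) / E_1(k+1, m, 0), where for r even E_1(r,p,s) = prod_{r < l < 2p - r + 2} (l + 2s)^{-r/2} * prod_{2 <= l <= r} ((l+2s)(2p - l + 2 + 2s))^{-floor(l/2)}, and for r odd E_1(r,p,s) = (((r-1)/2 + s)! / (p - (r-1)/2 + s)!) * E_1(r-1, p, s). -/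

import Mathlib

open Finset
open scoped Classical

noncomputable section

/-- Cells of the skew Young diagram `lam / mu` (0-indexed: cell `(i,j)` with `mu i ≤ j < lam i`). -/
def skewCells (lam mu : ℕ →₀ ℕ) : Finset (ℕ × ℕ) :=
  lam.support.biUnion fun i =>
    ((Finset.range (lam i)).filter fun j => mu i ≤ j).image fun j => (i, j)

/-- A finitely supported function is a partition if it is antitone. -/
def IsPartition (l : ℕ →₀ ℕ) : Prop := ∀ i j : ℕ, i ≤ j → l j ≤ l i

/-- The type of all integer partitions. -/
def Ptn : Type := {l : ℕ →₀ ℕ // IsPartition l}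

/-- Semistandard condition: rows weakly increase, columns strictly increase. -/
def IsSSYT (lam mu : ℕ →₀ ℕ) (n : ℕ) (T : skewCells lam mu → Fin n) : Prop :=
  ∀ c c' : skewCells lam mu,
    ((c : ℕ × ℕ).1 = (c' : ℕ × ℕ).1 → (c : ℕ × ℕ).2 ≤ (c' : ℕ × ℕ).2 → T c ≤ T c') ∧
    ((c : ℕ × ℕ).2 = (c' : ℕ × ℕ).2 → (c : ℕ × ℕ).1 < (c' : ℕ × ℕ).1 → T c < T c')

/-- The (skew) Schur polynomial `s_{lam/mu}` in `n` variables, evaluated at `u`. -/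
def skewSchur {R : Type*} [CommSemiring R] (n : ℕ) (lam mu : ℕ →₀ ℕ) (u : Fin n → R) : R :=
  ∑ T ∈ Finset.univ.filter (IsSSYT lam mu n), ∏ c : skewCells lam mu, u (T c)

/-- The number of standard Young tableaux of an arbitrary (truncated) diagram `D`:
bijective fillings increasing along rows and down columns. -/
def sytCard (D : Finset (ℕ × ℕ)) : ℕ :=
  (Finset.univ.filter fun T : D → Fin D.card => Function.Bijective T ∧
    ∀ c c' : D, ((c : ℕ × ℕ).1 = (c' : ℕ × ℕ).1 → (c : ℕ × ℕ).2 < (c' : ℕ × ℕ).2 → T c < T c') ∧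
      ((c : ℕ × ℕ).2 = (c' : ℕ × ℕ).2 → (c : ℕ × ℕ).1 < (c' : ℕ × ℕ).1 → T c < T c')).card

/-- Complete homogeneous symmetric polynomial of degree `s` in `p` variables, evaluated at `u`. -/
def hpoly {R : Type*} [CommSemiring R] (p s : ℕ) (u : Fin p → R) : R :=
  ∑ f ∈ Finset.univ.filter (fun f : Fin s → Fin p => Monotone f), ∏ t, u (f t)

/-- The rectangular partition `(p^k)`. -/
def rectPtn (k p : ℕ) : ℕ →₀ ℕ :=
  Finsupp.onFinset (Finset.range k) (fun i => if i < k then p else 0)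
    (fun a ha => by
      simp only [Finset.mem_range]
      by_contra h
      simp [h] at ha)

/-- Plane partition of shape `D`: supported on `D`, weakly decreasing along rows and columns. -/
def IsPPofShape (D : Finset (ℕ × ℕ)) (T : ℕ × ℕ → ℕ) : Prop :=
  (∀ c, c ∉ D → T c = 0) ∧ ∀ c ∈ D, ∀ c' ∈ D,
    (c.1 = c'.1 → c.2 ≤ c'.2 → T c' ≤ T c) ∧ (c.2 = c'.2 → c.1 ≤ c'.1 → T c' ≤ T c)

/-- The factor `E_1(r,p,s)` for `r` even. -/
def E1even (r p s : ℕ) : ℚ :=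
  (∏ l ∈ Finset.Ioo r (2 * p - r + 2), ((l + 2 * s : ℕ) : ℚ) ^ (r / 2))⁻¹ *
    (∏ l ∈ Finset.Icc 2 r, (((l + 2 * s) * (2 * p - l + 2 + 2 * s) : ℕ) : ℚ) ^ (l / 2))⁻¹

/-- The factor `E_1(r,p,s)`. -/
def E1 (r p s : ℕ) : ℚ :=
  if r % 2 = 0 then E1even r p s
  else (Nat.factorial ((r - 1) / 2 + s) : ℚ) / (Nat.factorial (p - (r - 1) / 2 + s) : ℚ) *
    E1even (r - 1) p s

/-!
The volume of the order polytope of a diagram with `N` cells is `sytCard / N!`. Building the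
truncated rectangle up diagonal by diagonal, the joint law of the coordinates on the outermost
diagonal is known at every stage: adding a diagonal integrates over the interlacing sequences, and
the Dixon–Anderson integrals reproduce densities of the form
`∏ i < j, (x j - x i) * ∏ j, x j ^ a * (1 - x j) ^ b` up to constants. The number of tableaux of
each of the three shapes in the formula is thus an explicit constant times a Selberg integral with
`γ = 1 / 2`. The constants cancel in the product formula, and the quotient of the Selberg integrals
with exponents `s` and `0` equals `E1 r m s / E1 r m 0`, because Aomoto's recursion in `s` is
also satisfied by `E1`.
-/

open MeasureTheory
open scoped ENNReal Nat

section OrderPolytope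

variable {ι : Type*} {r : ι → ι → Prop} {N : ℕ}

/-- The order polytope of a relation `r` (in Stanley's sense when `r` is a partial order): the
points of the unit cube whose coordinates increase weakly along `r`. -/
def orderPolytope (r : ι → ι → Prop) : Set (ι → ℝ) :=
  {x | x ∈ Set.Icc 0 1 ∧ ∀ c c', r c c' → x c ≤ x c'}

/-- The points of the unit cube whose coordinates are ordered strictly as in the labelling `T`.
These regions dissect an order polytope along the linear extensions. -/
def chainRegion (T : ι ≃ Fin N) : Set (ι → ℝ) :=
  {x | x ∈ Set.Icc 0 1 ∧ StrictMono (x ∘ T.symm)}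

lemma isClosed_orderPolytope (r : ι → ι → Prop) : IsClosed (orderPolytope r) := by
  simp only [orderPolytope, Set.ofPred_and, Set.ofPred_forall]
  exact isClosed_Icc.inter <| isClosed_iInter fun c ↦ isClosed_iInter fun c' ↦
    isClosed_iInter fun _ ↦ isClosed_le (continuous_apply c) (continuous_apply c')

lemma isCompact_orderPolytope (r : ι → ι → Prop) : IsCompact (orderPolytope r) :=
  isCompact_Icc.of_isClosed_subset (isClosed_orderPolytope r) fun _ hx ↦ hx.1

lemma measurableSet_orderPolytope [Countable ι] (r : ι → ι → Prop) :
    MeasurableSet (orderPolytope r) :=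
  (isClosed_orderPolytope r).measurableSet

lemma measurableSet_chainRegion [Countable ι] (T : ι ≃ Fin N) :
    MeasurableSet (chainRegion T) := by
  simp only [chainRegion, StrictMono, Set.ofPred_and, Set.ofPred_forall]
  exact measurableSet_Icc.inter <| MeasurableSet.iInter fun i ↦ MeasurableSet.iInter fun j ↦
    MeasurableSet.iInter fun _ ↦ measurableSet_lt (measurable_pi_apply _) (measurable_pi_apply _)

lemma pairwise_disjoint_chainRegion :
    Pairwise (Function.onFun Disjoint (chainRegion : (ι ≃ Fin N) → Set (ι → ℝ))) := by
  refine fun T T' hne ↦ Set.disjoint_left.2 fun x ⟨_, hT⟩ ⟨_, hT'⟩ ↦ hne ?_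
  have hx : Function.Injective x := by
    simpa [Function.comp_assoc] using hT.injective.comp T.injective
  have hrange : Set.range (x ∘ T.symm) = Set.range (x ∘ T'.symm) := by
    rw [T.symm.surjective.range_comp, T'.symm.surjective.range_comp]
  have hcomp := (StrictMono.range_inj hT hT').1 hrange
  exact Equiv.symm_bijective.injective (DFunLike.coe_injective (hx.comp_left hcomp))

lemma exists_strictMono_comp_symm (e : ι ≃ Fin N) {x : ι → ℝ} (hx : Function.Injective x) :
    ∃ T : ι ≃ Fin N, StrictMono (x ∘ T.symm) :=
  let σ := Tuple.sort (x ∘ e.symm)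
  ⟨e.trans σ.symm, (Tuple.monotone_sort (x ∘ e.symm)).strictMono_of_injective
    ((hx.comp e.symm.injective).comp σ.injective)⟩

variable [Fintype ι]

lemma volume_setOf_apply_eq_apply {i j : ι} (hij : i ≠ j) :
    volume {x : ι → ℝ | x i = x j} = 0 := by
  let L : (ι → ℝ) →ₗ[ℝ] ℝ := (LinearMap.proj i : (ι → ℝ) →ₗ[ℝ] ℝ) - LinearMap.proj j
  have hker : LinearMap.ker L ≠ ⊤ := fun h ↦ by
    have : L (Pi.single i 1) = 0 := LinearMap.mem_ker.1 (h ▸ Submodule.mem_top)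
    simp [L, hij.symm] at this
  convert Measure.addHaar_submodule volume _ hker using 2
  ext x
  simp [L, sub_eq_zero]

lemma ae_injective : ∀ᵐ x : ι → ℝ, Function.Injective x := by
  have hne (i j : ι) (hij : i ≠ j) : ∀ᵐ x : ι → ℝ, x i ≠ x j := by
    simpa only [ae_iff, not_not] using volume_setOf_apply_eq_apply hij
  simp only [← ae_all_iff] at hne
  filter_upwards [hne] with x hx i j hij
  exact not_imp_not.1 (hx i j) hij

lemma volume_chainRegion (T : ι ≃ Fin N) :
    volume (chainRegion T) = volume (chainRegion (Equiv.refl (Fin N))) := by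
  have h := volume_measurePreserving_piCongrLeft (fun _ : Fin N ↦ ℝ) T
  rw [← h.measure_preimage_equiv]
  congr 1
  ext x
  have hx : MeasurableEquiv.piCongrLeft (fun _ : Fin N ↦ ℝ) T x = x ∘ T.symm := by
    ext i
    simp [MeasurableEquiv.coe_piCongrLeft, Equiv.piCongrLeft_apply]
  simp only [chainRegion, Set.mem_preimage, Set.mem_ofPred_eq, hx, Set.mem_Icc, Pi.le_def,
    Function.comp_apply, Pi.zero_apply, Pi.one_apply, T.symm.forall_congr_left, Equiv.symm_symm,
    Equiv.symm_apply_apply, Equiv.refl_symm, Equiv.coe_refl, Function.comp_id]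

lemma orderPolytope_ae_eq_biUnion_chainRegion (hr : ∀ c, ¬ r c c) (hN : Fintype.card ι = N) :
    orderPolytope r =ᵐ[volume]
      ⋃ T ∈ ({T | ∀ c c', r c c' → T c < T c'} : Finset (ι ≃ Fin N)), chainRegion T := by
  filter_upwards [ae_injective] with x hx
  refine propext ?_
  change x ∈ orderPolytope r ↔ x ∈ ⋃ T ∈ _, chainRegion T
  simp only [Set.mem_iUnion, mem_filter_univ, exists_prop]
  constructor
  · rintro ⟨hcube, hmono⟩
    obtain ⟨T, hT⟩ := exists_strictMono_comp_symm (Fintype.equivFinOfCardEq hN) hx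
    refine ⟨T, fun c c' hcc' ↦ ?_, hcube, hT⟩
    have hne : c ≠ c' := by rintro rfl; exact hr c hcc'
    have hlt : x c < x c' := (hmono c c' hcc').lt_of_ne (hx.ne hne)
    exact hT.lt_iff_lt.1 (by simpa using hlt)
  · rintro ⟨T, hT, hcube, hmono⟩
    exact ⟨hcube, fun c c' hcc' ↦ by simpa using (hmono (hT c c' hcc')).le⟩

lemma volume_orderPolytope (hr : ∀ c, ¬ r c c) (hN : Fintype.card ι = N) :
    volume (orderPolytope r) = #{T : ι ≃ Fin N | ∀ c c', r c c' → T c < T c'} *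
      volume (chainRegion (Equiv.refl (Fin N))) := by
  rw [measure_congr (orderPolytope_ae_eq_biUnion_chainRegion hr hN),
    measure_biUnion_finset (fun _ _ _ _ h ↦ pairwise_disjoint_chainRegion h)
      fun T _ ↦ measurableSet_chainRegion T]
  simp only [volume_chainRegion, sum_const, nsmul_eq_mul]

lemma factorial_mul_volume_chainRegion (N : ℕ) :
    (N ! : ℝ≥0∞) * volume (chainRegion (Equiv.refl (Fin N))) = 1 := by
  have hcube : volume (orderPolytope fun _ _ : Fin N ↦ False) = 1 := by
    have h : (orderPolytope fun _ _ : Fin N ↦ False) = Set.Icc 0 1 := by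
      simp [orderPolytope, Set.Icc]
    simp [h, Real.volume_Icc_pi]
  rw [← hcube, volume_orderPolytope (fun _ ↦ id) (Fintype.card_fin N)]
  simp [← Nat.card_eq_fintype_card, Nat.card_perm, Nat.card_fin]

lemma card_linearExtensions (hr : ∀ c, ¬ r c c) (hN : Fintype.card ι = N) :
    (#{T : ι → Fin N | Function.Bijective T ∧ ∀ c c', r c c' → T c < T c'} : ℝ≥0∞) =
      N ! * volume (orderPolytope r) := by
  have hequiv : #{T : ι → Fin N | Function.Bijective T ∧ ∀ c c', r c c' → T c < T c'} =
      #{T : ι ≃ Fin N | ∀ c c', r c c' → T c < T c'} := by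
    refine (card_bij (fun (T : ι ≃ Fin N) _ ↦ ⇑T) (fun T hT ↦ ?_)
      (fun _ _ _ _ ↦ DFunLike.coe_injective.eq_iff.1) fun T hT ↦ ?_).symm
    · simpa [T.bijective] using hT
    · simp only [mem_filter_univ] at hT
      exact ⟨Equiv.ofBijective T hT.1, by simpa using hT.2, rfl⟩
  rw [hequiv, volume_orderPolytope hr hN, mul_left_comm, factorial_mul_volume_chainRegion, mul_one]

end OrderPolytope

section Determinants

variable {R : Type*} [CommRing R] {p : ℕ}

lemma det_of_cons_one (A : Fin (p + 1) → Fin p → R) :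
    Matrix.det (Matrix.of fun u ↦ (Fin.cons 1 (A u) : Fin (p + 1) → R)) =
      Matrix.det (Matrix.of fun u j ↦ A u.succ j - A u.castSucc j) := by
  let B : Matrix (Fin (p + 1)) (Fin (p + 1)) R := Matrix.of <|
    Fin.cons (Fin.cons 1 (A 0)) fun u ↦ Fin.cons 0 fun j ↦ A u.succ j - A u.castSucc j
  rw [Matrix.det_eq_of_forall_row_eq_smul_add_pred (B := B) fun _ ↦ 1,
    Matrix.det_succ_column_zero, Fin.sum_univ_succ]
  · simp [B, Matrix.submatrix]
  · simp [B]
  · intro i j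
    refine Fin.cases ?_ (fun j ↦ ?_) j <;> simp [B]

lemma det_of_cons_one_of_zero (A : Fin (p + 1) → Fin p → R) (hA : ∀ j, A 0 j = 0) :
    Matrix.det (Matrix.of fun u ↦ (Fin.cons 1 (A u) : Fin (p + 1) → R)) =
      Matrix.det (Matrix.of fun u j ↦ A u.succ j) := by
  rw [Matrix.det_succ_row_zero, Fin.sum_univ_succ]
  simp [hA, Matrix.submatrix]

lemma det_eq_of_last_row_zero (A : Matrix (Fin (p + 1)) (Fin (p + 1)) R)
    (hA : ∀ j : Fin p, A (Fin.last p) j.succ = 0) :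
    A.det = (-1) ^ p * A (Fin.last p) 0 *
      Matrix.det (Matrix.of fun u j : Fin p ↦ A u.castSucc j.succ) := by
  rw [Matrix.det_succ_row A (Fin.last p), Fin.sum_univ_succ]
  simp [hA, Matrix.submatrix]

lemma det_of_pow_mul (x w : Fin p → R) :
    Matrix.det (Matrix.of fun u j ↦ x u ^ (j : ℕ) * w u) =
      (Matrix.vandermonde x).det * ∏ u, w u := by
  rw [mul_comm, ← Matrix.det_mul_column]
  simp [Matrix.vandermonde, mul_comm]

lemma det_of_mul_pow_mul (c x w : Fin p → R) :
    Matrix.det (Matrix.of fun u j ↦ c j * (x u ^ (j : ℕ) * w u)) =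
      (∏ j, c j) * ((Matrix.vandermonde x).det * ∏ u, w u) := by
  rw [← det_of_pow_mul]
  exact Matrix.det_mul_row c _

lemma det_of_cons_pow_sub_mul_pow_mul (c : Fin p → R) (x w : Fin (p + 1) → R) :
    Matrix.det (Matrix.of fun u ↦ (Fin.cons (w u)
        fun j ↦ (x u ^ (j + 1 : ℕ) - c j * x u ^ (j : ℕ)) * w u : Fin (p + 1) → R)) =
      (Matrix.vandermonde x).det * ∏ u, w u := by
  rw [← det_of_pow_mul]
  refine (Matrix.det_eq_of_forall_col_eq_smul_add_pred c (fun u ↦ ?_) fun u j ↦ ?_).symm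
  · simp
  · simp only [Matrix.of_apply, Fin.cons_succ, Fin.val_succ, Fin.val_castSucc]
    ring

end Determinants

section DeterminantIntegrals

lemma integral_pi_det_of {n : Type*} [Fintype n] [DecidableEq n] (μ : n → Measure ℝ)
    [∀ u, SigmaFinite (μ u)] (f : n → ℝ → ℝ) (hf : ∀ u j, Integrable (f j) (μ u)) :
    ∫ y, Matrix.det (Matrix.of fun u j ↦ f j (y u)) ∂(Measure.pi μ) =
      Matrix.det (Matrix.of fun u j ↦ ∫ t, f j t ∂(μ u)) := by
  have hdet (y : n → ℝ) : Matrix.det (Matrix.of fun u j ↦ f j (y u)) =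
      ∑ σ : Equiv.Perm n, ((Equiv.Perm.sign σ : ℤ) : ℝ) * ∏ u, f (σ u) (y u) := by
    rw [← Matrix.det_transpose, Matrix.det_apply']
    rfl
  simp_rw [hdet]
  rw [integral_finsetSum _ fun σ _ ↦
    (Integrable.fintype_prod (f := fun u ↦ f (σ u)) fun u ↦ hf u (σ u)).const_mul _,
    ← Matrix.det_transpose, Matrix.det_apply']
  refine sum_congr rfl fun σ _ ↦ ?_
  rw [integral_const_mul, integral_fintype_prod_eq_prod fun u ↦ f (σ u)]
  rfl

lemma setIntegral_Icc_det_of {p : ℕ} {z : Fin (p + 1) → ℝ} (hz : Monotone z) (F f : Fin p → ℝ → ℝ)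
    (hF : ∀ j t, HasDerivAt (F j) (f j t) t) (hf : ∀ j, Continuous (f j)) :
    ∫ y in Set.Icc (fun u : Fin p ↦ z u.castSucc) (fun u ↦ z u.succ),
        Matrix.det (Matrix.of fun u j ↦ f j (y u)) =
      Matrix.det (Matrix.of fun u ↦ (Fin.cons 1 fun j ↦ F j (z u) : Fin (p + 1) → ℝ)) := by
  rw [← Set.pi_univ_Icc, volume_pi, Measure.restrict_pi_pi, integral_pi_det_of _ _ fun u j ↦
    (hf j).continuousOn.integrableOn_compact isCompact_Icc, det_of_cons_one]
  congr! 4 with u j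
  rw [integral_Icc_eq_integral_Ioc,
    ← intervalIntegral.integral_of_le (hz (Fin.castSucc_le_succ u))]
  exact intervalIntegral.integral_eq_sub_of_hasDerivAt (fun t _ ↦ hF j t)
    ((hf j).intervalIntegrable _ _)

end DeterminantIntegrals

section InterlacingBox

variable {p q : ℕ}

/-- The simplex `0 ≤ x 0 ≤ ⋯ ≤ x (p - 1) ≤ 1`. -/
def orderedSimplex (p : ℕ) : Set (Fin p → ℝ) :=
  orderPolytope fun i j : Fin p ↦ i ≤ j

lemma orderedSimplex_zero : orderedSimplex 0 = Set.univ :=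
  Set.eq_univ_of_forall fun _ ↦ ⟨⟨isEmptyElim, isEmptyElim⟩, isEmptyElim⟩

lemma isCompact_orderedSimplex (p : ℕ) : IsCompact (orderedSimplex p) :=
  isCompact_orderPolytope _

lemma measurableSet_orderedSimplex (p : ℕ) : MeasurableSet (orderedSimplex p) :=
  measurableSet_orderPolytope _

/-- The tuple `x` as the infinite sequence `0, …, 0, x 0, …, x (q - 1), 1, 1, …` that starts with
`α` zeros. -/
def padded (α : ℕ) (x : Fin q → ℝ) (i : ℕ) : ℝ :=
  if i < α then 0 else if h : i - α < q then x ⟨i - α, h⟩ else 1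

/-- The `y` with `z u ≤ y u ≤ z (u + 1)` for `u < p`, where `z` is `x` padded by `α` zeros in front
and by ones at the end; the domain of the Dixon–Anderson integrals. -/
def interlacingBox (p α : ℕ) (x : Fin q → ℝ) : Set (Fin p → ℝ) :=
  Set.Icc (fun u ↦ padded α x u) (fun u ↦ padded α x (u + 1))

lemma padded_of_lt {α i : ℕ} (x : Fin q → ℝ) (hi : i < α) : padded α x i = 0 :=
  if_pos hi

lemma padded_add (α : ℕ) (x : Fin q → ℝ) (v : Fin q) : padded α x (v + α) = x v := by
  simp [padded]

lemma padded_of_le {α i : ℕ} (x : Fin q → ℝ) (hi : q + α ≤ i) : padded α x i = 1 := by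
  simp only [padded]
  split_ifs <;> first | rfl | omega

lemma padded_mem_Icc {x : Fin q → ℝ} (hx : x ∈ Set.Icc 0 1) (α i : ℕ) :
    padded α x i ∈ Set.Icc 0 1 := by
  unfold padded
  split_ifs with _ h
  · simp
  · exact ⟨hx.1 _, hx.2 _⟩
  · simp

lemma monotone_padded {x : Fin q → ℝ} (hx : x ∈ orderedSimplex q) (α : ℕ) :
    Monotone (padded α x) := by
  intro i j hij
  have hi := padded_mem_Icc hx.1 α i
  have hj := padded_mem_Icc hx.1 α j
  unfold padded at *
  split_ifs at * <;> first | grind | (exact hx.2 _ _ (by simp; omega))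

end InterlacingBox

section DixonAnderson

variable {p q : ℕ}

/-- The integrand of the Selberg integral with `γ = 1 / 2`: on `orderedSimplex p` the Vandermonde
determinant is nonnegative, so no absolute value is needed there. -/
def selbergWeight (p a b : ℕ) (x : Fin p → ℝ) : ℝ :=
  (Matrix.vandermonde x).det * ∏ u, x u ^ a * (1 - x u) ^ b

lemma continuous_selbergWeight (p a b : ℕ) : Continuous (selbergWeight p a b) := by
  unfold selbergWeight
  simp only [Matrix.det_vandermonde]
  fun_prop

lemma selbergWeight_nonneg (a b : ℕ) {x : Fin p → ℝ} (hx : x ∈ orderedSimplex p) :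
    0 ≤ selbergWeight p a b x := by
  rw [selbergWeight, Matrix.det_vandermonde]
  refine mul_nonneg (prod_nonneg fun i _ ↦ prod_nonneg fun j hj ↦ ?_) (prod_nonneg fun u _ ↦ ?_)
  · exact sub_nonneg.2 (hx.2 _ _ (mem_Ioi.1 hj).le)
  · exact mul_nonneg (pow_nonneg (hx.1.1 u) _) (pow_nonneg (sub_nonneg.2 (hx.1.2 u)) _)

lemma setIntegral_interlacingBox_det_of {x : Fin q → ℝ} (hx : x ∈ orderedSimplex q) (α : ℕ)
    (F f : Fin p → ℝ → ℝ) (hF : ∀ j t, HasDerivAt (F j) (f j t) t) (hf : ∀ j, Continuous (f j)) :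
    ∫ y in interlacingBox p α x, Matrix.det (Matrix.of fun u j ↦ f j (y u)) =
      Matrix.det (Matrix.of fun u : Fin (p + 1) ↦
        (Fin.cons 1 fun j ↦ F j (padded α x u) : Fin (p + 1) → ℝ)) :=
  setIntegral_Icc_det_of ((monotone_padded hx α).comp Fin.val_strictMono.monotone) F f hF hf

lemma prod_range_add_one_add (b n : ℕ) :
    ∏ j ∈ range n, ((b : ℝ) + 1 + j) = (b + n)! / b ! := by
  rw [eq_div_iff (by positivity), mul_comm]
  exact_mod_cast (Nat.ascFactorial_eq_prod_range (b + 1) n ▸ Nat.factorial_mul_ascFactorial b n)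

lemma prod_fin_inv_add_one_add (b n : ℕ) :
    ∏ j : Fin n, ((b : ℝ) + 1 + j)⁻¹ = b ! / (b + n)! := by
  rw [prod_inv_distrib, Fin.prod_univ_eq_prod_range (fun j ↦ (b : ℝ) + 1 + j),
    prod_range_add_one_add, inv_div]

lemma integral_pow_mul_one_sub_pow (a b : ℕ) :
    ∫ t in (0 : ℝ)..1, t ^ a * (1 - t) ^ b = a ! * b ! / (a + b + 1)! := by
  have hbeta := Complex.Gamma_mul_Gamma_eq_betaIntegral (s := a + 1) (t := b + 1)
    (by simpa using by positivity) (by simpa using by positivity)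
  have hsum : (a + 1 + (b + 1) : ℂ) = ((a + b + 1 : ℕ) : ℂ) + 1 := by push_cast; ring
  simp only [Complex.betaIntegral, add_sub_cancel_right, Complex.cpow_natCast, hsum,
    Complex.Gamma_nat_eq_factorial] at hbeta
  rw [eq_div_iff (by positivity), mul_comm]
  norm_cast at hbeta
  rw [intervalIntegral.integral_ofReal] at hbeta
  exact_mod_cast hbeta.symm

lemma hasDerivAt_pow_mul_one_sub_pow (a b : ℕ) (t : ℝ) :
    HasDerivAt (fun t ↦ t ^ a * (1 - t) ^ b)
      (a * t ^ (a - 1) * (1 - t) ^ b - b * t ^ a * (1 - t) ^ (b - 1)) t := by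
  have h := (hasDerivAt_pow a t).fun_mul (((hasDerivAt_id' t).const_sub 1).fun_pow b)
  exact h.congr_deriv (by ring)

lemma hasDerivAt_inv_mul_pow_mul_pow_succ (a j : ℕ) (t : ℝ) :
    HasDerivAt (fun t ↦ (a + 1 + j : ℝ)⁻¹ * (t ^ j * t ^ (a + 1))) (t ^ j * t ^ a) t := by
  simp only [← pow_add]
  refine ((hasDerivAt_pow (j + (a + 1)) t).const_mul _).congr_deriv ?_
  rw [← add_assoc, Nat.add_sub_cancel]
  push_cast
  field_simp
  ring

lemma setIntegral_selbergWeight_of_interior {x : Fin (p + 1) → ℝ}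
    (hx : x ∈ orderedSimplex (p + 1)) :
    ∫ y in interlacingBox p 0 x, selbergWeight p 0 0 y =
      1 / p ! * selbergWeight (p + 1) 0 0 x := by
  have hbox := setIntegral_interlacingBox_det_of hx 0 _ _
    (fun (j : Fin p) ↦ hasDerivAt_inv_mul_pow_mul_pow_succ 0 j) fun j ↦ by fun_prop
  have hpad (u : Fin (p + 1)) : padded 0 x u = x u := padded_add 0 x u
  let c : Fin (p + 1) → ℝ := Fin.cons 1 fun j : Fin p ↦ ((0 : ℕ) + 1 + j : ℝ)⁻¹
  have hscale : (Matrix.of fun u : Fin (p + 1) ↦ (Fin.cons 1 fun j : Fin p ↦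
      ((0 : ℕ) + 1 + j : ℝ)⁻¹ * (padded 0 x u ^ (j : ℕ) * padded 0 x u ^ (0 + 1)) :
        Fin (p + 1) → ℝ)) = Matrix.of fun u j ↦ c j * (x u ^ (j : ℕ) * 1) := by
    ext u j
    refine Fin.cases ?_ (fun j ↦ ?_) j <;> simp [c, hpad, pow_succ]
  rw [hscale, det_of_mul_pow_mul, Fin.prod_univ_succ] at hbox
  simp only [c, Fin.cons_zero, Fin.cons_succ, prod_fin_inv_add_one_add, det_of_pow_mul] at hbox
  simpa [selbergWeight] using hbox

lemma setIntegral_selbergWeight_of_left (a : ℕ) {x : Fin p → ℝ} (hx : x ∈ orderedSimplex p) :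
    ∫ y in interlacingBox p 1 x, selbergWeight p a 0 y =
      a ! / (a + p)! * selbergWeight p (a + 1) 0 x := by
  have hbox := setIntegral_interlacingBox_det_of hx 1 _ _
    (fun (j : Fin p) ↦ hasDerivAt_inv_mul_pow_mul_pow_succ a j) fun j ↦ by fun_prop
  rw [det_of_cons_one_of_zero _ fun j ↦ by simp [padded_of_lt]] at hbox
  simp only [Fin.val_succ, padded_add, det_of_mul_pow_mul, det_of_pow_mul,
    prod_fin_inv_add_one_add] at hbox
  simpa [selbergWeight] using hbox

lemma setIntegral_selbergWeight_of_right (b : ℕ) {x : Fin p → ℝ} (hx : x ∈ orderedSimplex p) :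
    ∫ y in interlacingBox p 0 x, selbergWeight p 0 b y =
      b ! / (b + p)! * selbergWeight p 0 (b + 1) x := by
  have hF (j : Fin p) (t : ℝ) :
      HasDerivAt (fun t ↦ -(b + 1 + j : ℝ)⁻¹ * ((t - 1) ^ (j : ℕ) * (1 - t) ^ (b + 1)))
        ((t - 1) ^ (j : ℕ) * (1 - t) ^ b) t := by
    have h := ((hasDerivAt_inv_mul_pow_mul_pow_succ b j (1 - t)).comp_const_sub 1 t).const_mul
      ((-1) ^ (j + 1 : ℕ))
    have hneg (t : ℝ) : (t - 1) ^ (j : ℕ) = (-1) ^ (j : ℕ) * (1 - t) ^ (j : ℕ) := by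
      rw [← mul_pow]; ring
    simp only [hneg]
    convert! h using 1
    · ext t
      ring
    · ring
  have hbox := setIntegral_interlacingBox_det_of hx 0 _ _ hF fun j ↦ by fun_prop
  have hlast : padded 0 x p = 1 := padded_of_le x le_rfl
  have hpad (u : Fin p) : padded 0 x u = x u := padded_add 0 x u
  rw [det_eq_of_last_row_zero _ fun j ↦ by simp [hlast]] at hbox
  simp only [Matrix.of_apply, Fin.cons_zero, Fin.cons_succ, Fin.val_castSucc, hpad,
    det_of_mul_pow_mul, det_of_pow_mul, Matrix.det_vandermonde_sub, prod_neg,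
    prod_fin_inv_add_one_add] at hbox
  have hsign : (-1 : ℝ) ^ p * (-1) ^ p = 1 := by rw [← mul_pow]; norm_num
  simp only [selbergWeight, pow_zero, one_mul, hbox, card_univ, Fintype.card_fin]
  linear_combination (b ! / (b + p)! * ((Matrix.vandermonde x).det * ∏ u, (1 - x u) ^ (b + 1))) *
    hsign

lemma hasDerivAt_neg_inv_mul_pow_mul (a b j : ℕ) (t : ℝ) :
    HasDerivAt (fun t ↦ -((a + b + 1 : ℕ) + 1 + j : ℝ)⁻¹ *
        (t ^ j * (t ^ (a + 1) * (1 - t) ^ (b + 1))))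
      ((t ^ (j + 1) - (a + 1 + j) / ((a + b + 1 : ℕ) + 1 + j) * t ^ j) *
        (t ^ a * (1 - t) ^ b)) t := by
  have h := (hasDerivAt_pow_mul_one_sub_pow (j + (a + 1)) (b + 1) t).const_mul
    (-((a + b + 1 : ℕ) + 1 + j : ℝ)⁻¹)
  convert! h using 1
  · ext t
    ring
  simp only [← add_assoc, Nat.add_sub_cancel]
  push_cast
  field_simp
  ring

/-- Antiderivatives vanishing at `0` of `w = t ^ a * (1 - t) ^ b` and of `w` times monic polynomials
of degrees `1, …, p`, chosen such that all but the first vanish at `1` as well. -/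
def betaPrimitive (p a b : ℕ) : Fin (p + 1) → ℝ → ℝ :=
  Fin.cons (fun t ↦ ∫ s in (0 : ℝ)..t, s ^ a * (1 - s) ^ b) fun j t ↦
    -((a + b + 1 : ℕ) + 1 + j : ℝ)⁻¹ * (t ^ (j : ℕ) * (t ^ (a + 1) * (1 - t) ^ (b + 1)))

lemma setIntegral_selbergWeight_eq_det_betaPrimitive (a b α : ℕ) {x : Fin q → ℝ}
    (hx : x ∈ orderedSimplex q) :
    ∫ y in interlacingBox (p + 1) α x, selbergWeight (p + 1) a b y =
      Matrix.det (Matrix.of fun u : Fin (p + 2) ↦ (Fin.cons 1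
        fun j ↦ betaPrimitive p a b j (padded α x u) : Fin (p + 2) → ℝ)) := by
  let w (t : ℝ) : ℝ := t ^ a * (1 - t) ^ b
  have hw : Continuous w := by fun_prop
  let c (j : Fin p) : ℝ := (a + 1 + j) / ((a + b + 1 : ℕ) + 1 + j)
  let f : Fin (p + 1) → ℝ → ℝ :=
    Fin.cons w fun j t ↦ (t ^ (j + 1 : ℕ) - c j * t ^ (j : ℕ)) * w t
  have hF (j) (t : ℝ) : HasDerivAt (betaPrimitive p a b j) (f j t) t := by
    refine Fin.cases ?_ (fun j ↦ ?_) j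
    · exact intervalIntegral.integral_hasDerivAt_right (hw.intervalIntegrable _ _)
        (hw.stronglyMeasurableAtFilter _ _) hw.continuousAt
    · exact hasDerivAt_neg_inv_mul_pow_mul a b j t
  have hf (j) : Continuous (f j) := by
    refine Fin.cases hw (fun j ↦ ?_) j
    simp only [f, Fin.cons_succ]
    fun_prop
  rw [← setIntegral_interlacingBox_det_of hx α _ f hF hf]
  congr! with y
  rw [selbergWeight, ← det_of_cons_pow_sub_mul_pow_mul c]
  congr! 3 with u
  ext j
  refine Fin.cases ?_ (fun j ↦ ?_) j <;> simp [f, w]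

lemma setIntegral_selbergWeight_of_left_right (a b : ℕ) {x : Fin p → ℝ}
    (hx : x ∈ orderedSimplex p) :
    ∫ y in interlacingBox (p + 1) 1 x, selbergWeight (p + 1) a b y =
      a ! * b ! / (a + b + 1 + p)! * selbergWeight p (a + 1) (b + 1) x := by
  have hzero (j) : betaPrimitive p a b j 0 = 0 := by
    refine Fin.cases ?_ (fun j ↦ ?_) j <;> simp [betaPrimitive]
  have hlast : padded 1 x (p + 1) = 1 := padded_of_le x le_rfl
  rw [setIntegral_selbergWeight_eq_det_betaPrimitive a b 1 hx,
    det_of_cons_one_of_zero _ fun j ↦ by simp [padded_of_lt, hzero],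
    det_eq_of_last_row_zero _ fun j ↦ by simp [betaPrimitive, hlast]]
  have hsign : (-1 : ℝ) ^ p * (-1) ^ p = 1 := by rw [← mul_pow]; norm_num
  simp only [betaPrimitive, Matrix.of_apply, Fin.cons_zero, Fin.cons_succ, Fin.val_succ,
    Fin.val_last, Fin.val_castSucc, hlast, integral_pow_mul_one_sub_pow, padded_add,
    det_of_mul_pow_mul, prod_neg, prod_fin_inv_add_one_add, selbergWeight, card_univ,
    Fintype.card_fin]
  field_simp
  linear_combination ((Matrix.vandermonde x).det * ∏ u, x u ^ (a + 1) * (1 - x u) ^ (b + 1)) *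
    hsign

end DixonAnderson

section Gluing

variable {ι κ : Type*} {p q : ℕ}

/-- The coordinates `x ∘ d` of a point `x` of the order polytope of `r`, distributed according to
Lebesgue measure, lie in `orderedSimplex p` and have density `w` there. -/
def HasMarginalDensity [Fintype ι] (r : ι → ι → Prop) (d : Fin p → ι) (w : (Fin p → ℝ) → ℝ) :
    Prop :=
  ∀ g : (Fin p → ℝ) → ℝ≥0∞, Measurable g →
    ∫⁻ x in orderPolytope r, g (x ∘ d) = ∫⁻ y in orderedSimplex p, g y * ENNReal.ofReal (w y)

lemma volume_orderPolytope_of_hasMarginalDensity [Fintype ι] {r : ι → ι → Prop} {d : Fin p → ι}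
    {w : (Fin p → ℝ) → ℝ} (h : HasMarginalDensity r d w) (hw : Continuous w)
    (hw_nonneg : ∀ y ∈ orderedSimplex p, 0 ≤ w y) :
    volume (orderPolytope r) = ENNReal.ofReal (∫ y in orderedSimplex p, w y) := by
  have hint : IntegrableOn w (orderedSimplex p) :=
    hw.continuousOn.integrableOn_compact (isCompact_orderedSimplex p)
  have hone := h 1 measurable_one
  simp only [Pi.one_apply, one_mul, setLIntegral_one] at hone
  rw [hone, ofReal_integral_eq_lintegral_ofReal hint]
  exact (ae_restrict_iff' (measurableSet_orderedSimplex p)).2 (.of_forall hw_nonneg)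

lemma mem_orderPolytope_sum_iff {μ ν : Type*} {r : ι → ι → Prop} {r' : κ → κ → Prop}
    (e : ι ⊕ ν ≃ κ) (d : μ → ι) (B A : μ → ν → Prop)
    (hold : ∀ i i', r' (e (.inl i)) (e (.inl i')) ↔ r i i')
    (hnew : ∀ v v', ¬ r' (e (.inr v)) (e (.inr v')))
    (hbelow : ∀ i v, r' (e (.inl i)) (e (.inr v)) ↔ ∃ u, B u v ∧ (i = d u ∨ r i (d u)))
    (habove : ∀ i v, r' (e (.inr v)) (e (.inl i)) ↔ ∃ u, A u v ∧ (i = d u ∨ r (d u) i))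
    (a : ι → ℝ) (x : ν → ℝ) :
    Sum.elim a x ∘ e.symm ∈ orderPolytope r' ↔ a ∈ orderPolytope r ∧ x ∈ Set.Icc 0 1 ∧
      (∀ u v, B u v → a (d u) ≤ x v) ∧ ∀ u v, A u v → x v ≤ a (d u) := by
  simp only [orderPolytope, Set.mem_ofPred_eq, Set.mem_Icc, Pi.le_def, Function.comp_apply,
    e.symm.forall_congr_left, Equiv.symm_symm, Equiv.symm_apply_apply, Sum.forall, Sum.elim_inl,
    Sum.elim_inr, Pi.zero_apply, Pi.one_apply, hold, hnew, hbelow, habove]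
  constructor <;> grind

lemma lintegral_pi_eq_lintegral_sum_elim [Fintype ι] [Fintype κ] {ν : Type*} [Fintype ν]
    (e : ι ⊕ ν ≃ κ) {h : (κ → ℝ) → ℝ≥0∞} (hh : Measurable h) :
    ∫⁻ T, h T = ∫⁻ x : ν → ℝ, ∫⁻ a : ι → ℝ, h (Sum.elim a x ∘ e.symm) := by
  have hmp := (volume_measurePreserving_piCongrLeft (fun _ : κ ↦ ℝ) e).comp
    (volume_measurePreserving_sumPiEquivProdPi_symm fun _ : ι ⊕ ν ↦ ℝ)
  have hmeas := (hh.comp hmp.measurable).aemeasurable (μ := volume.prod volume)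
  rw [← hmp.lintegral_comp hh]
  refine (lintegral_prod_symm _ hmeas).trans ?_
  refine lintegral_congr fun x ↦ lintegral_congr fun a ↦ congrArg h ?_
  ext c
  obtain ⟨c, rfl⟩ := e.surjective c
  rw [Function.comp_apply, Function.comp_apply, e.symm_apply_apply,
    MeasurableEquiv.coe_piCongrLeft, Equiv.piCongrLeft_apply_apply]
  cases c <;> rfl

lemma interlacingBox_subset_orderedSimplex (p α : ℕ) {x : Fin q → ℝ} (hx : x ∈ orderedSimplex q) :
    interlacingBox p α x ⊆ orderedSimplex p := by
  refine fun y hy ↦ ⟨⟨fun u ↦ ?_, fun u ↦ ?_⟩, fun u v huv ↦ ?_⟩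
  · exact (padded_mem_Icc hx.1 α u).1.trans (hy.1 u)
  · exact (hy.2 u).trans (padded_mem_Icc hx.1 α (u + 1)).2
  · rcases huv.eq_or_lt with rfl | hlt
    · exact le_rfl
    · exact (hy.2 u).trans ((monotone_padded hx α (Nat.succ_le_of_lt hlt)).trans (hy.1 v))

lemma monotone_of_mem_interlacingBox {α : ℕ} (hpq : q + α ≤ p + 1) {x : Fin q → ℝ}
    {y : Fin p → ℝ} (hy : y ∈ interlacingBox p α x) : Monotone x := by
  cases q with
  | zero => exact Subsingleton.monotone x
  | succ q =>
    refine Fin.monotone_iff_le_succ.2 fun v ↦ ?_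
    let u : Fin p := ⟨v + α, by omega⟩
    have hsucc : (v.succ + α : ℕ) = u + 1 := Nat.add_right_comm _ _ _
    calc x v.castSucc = padded α x u := (padded_add α x v.castSucc).symm
      _ ≤ y u := hy.1 u
      _ ≤ padded α x (u + 1) := hy.2 u
      _ = x v.succ := by rw [← hsucc, padded_add]

lemma mem_interlacingBox_iff {α : ℕ} (hα : α ≤ 1) (hpq : p ≤ q + α) {x : Fin q → ℝ}
    {y : Fin p → ℝ} (hy : y ∈ Set.Icc 0 1) :
    y ∈ interlacingBox p α x ↔ (∀ (u : Fin p) (v : Fin q), (v + α : ℕ) = u + 1 → y u ≤ x v) ∧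
      ∀ (u : Fin p) (v : Fin q), (u : ℕ) = v + α → x v ≤ y u := by
  constructor
  · refine fun hbox ↦ ⟨fun u v h ↦ ?_, fun u v h ↦ ?_⟩
    · exact padded_add α x v ▸ h ▸ hbox.2 u
    · exact padded_add α x v ▸ h ▸ hbox.1 u
  · refine fun ⟨hhigh, hlow⟩ ↦ ⟨fun u ↦ ?_, fun u ↦ ?_⟩
    · rcases lt_or_ge (u : ℕ) α with h | h
      · exact (padded_of_lt x h).trans_le (hy.1 u)
      · let v : Fin q := ⟨u - α, by omega⟩
        have hv : (u : ℕ) = v + α := by simp [v]; omega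
        exact (hv ▸ padded_add α x v).trans_le (hlow u v hv)
    · rcases lt_or_ge (u + 1 : ℕ) (q + α) with h | h
      · let v : Fin q := ⟨u + 1 - α, by omega⟩
        have hv : (v + α : ℕ) = u + 1 := by simp [v]; omega
        exact (hhigh u v hv).trans_eq (hv ▸ padded_add α x v).symm
      · exact (hy.2 u).trans_eq (padded_of_le x h).symm

lemma setLIntegral_indicator_interlacingBox {α : ℕ} (hpq : q + α ≤ p + 1)
    {w : (Fin p → ℝ) → ℝ} {w' : (Fin q → ℝ) → ℝ} (hw : Continuous w)
    (hw_nonneg : ∀ y ∈ orderedSimplex p, 0 ≤ w y)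
    (hint : ∀ x ∈ orderedSimplex q, ∫ y in interlacingBox p α x, w y = w' x) {x : Fin q → ℝ}
    (hx : x ∈ Set.Icc 0 1) :
    ∫⁻ y in orderedSimplex p, (interlacingBox p α x).indicator 1 y * ENNReal.ofReal (w y) =
      (orderedSimplex q).indicator (fun x ↦ ENNReal.ofReal (w' x)) x := by
  by_cases hmono : Monotone x
  · have hx' : x ∈ orderedSimplex q := ⟨hx, hmono⟩
    have hsub := interlacingBox_subset_orderedSimplex p α hx'
    have hind (y : Fin p → ℝ) : (interlacingBox p α x).indicator 1 y * ENNReal.ofReal (w y) =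
        (interlacingBox p α x).indicator (fun y ↦ ENNReal.ofReal (w y)) y := by
      by_cases hy : y ∈ interlacingBox p α x <;> simp [hy]
    have hmeas : MeasurableSet (interlacingBox p α x) := measurableSet_Icc
    have hwint : IntegrableOn w (interlacingBox p α x) :=
      hw.continuousOn.integrableOn_compact isCompact_Icc
    simp_rw [hind]
    rw [lintegral_indicator hmeas, Measure.restrict_restrict hmeas,
      Set.inter_eq_left.2 hsub, Set.indicator_of_mem hx', ← hint x hx',
      ofReal_integral_eq_lintegral_ofReal hwint]
    exact (ae_restrict_iff' hmeas).2 (.of_forall fun y hy ↦ hw_nonneg y (hsub hy))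
  · have hempty : interlacingBox p α x = ∅ := Set.eq_empty_of_forall_notMem fun y hy ↦
      hmono (monotone_of_mem_interlacingBox hpq hy)
    rw [hempty, Set.indicator_of_notMem fun h ↦ hmono h.2]
    simp

lemma indicator_orderPolytope_sumElim {r : ι → ι → Prop} {r' : κ → κ → Prop} (e : ι ⊕ Fin q ≃ κ)
    {d : Fin p → ι} {α : ℕ} {x : Fin q → ℝ} (hx : x ∈ Set.Icc 0 1)
    (hmem : ∀ a, Sum.elim a x ∘ e.symm ∈ orderPolytope r' ↔
      a ∈ orderPolytope r ∧ x ∈ Set.Icc 0 1 ∧ a ∘ d ∈ interlacingBox p α x)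
    (g : (Fin q → ℝ) → ℝ≥0∞) (a : ι → ℝ) :
    (orderPolytope r').indicator (fun T ↦ g (T ∘ e ∘ .inr)) (Sum.elim a x ∘ e.symm) =
      g x * (orderPolytope r).indicator
        (fun a ↦ (interlacingBox p α x).indicator 1 (a ∘ d)) a := by
  have hcomp : (Sum.elim a x ∘ e.symm) ∘ e ∘ .inr = x := by ext v; simp
  by_cases ha : a ∈ orderPolytope r <;> by_cases hy : a ∘ d ∈ interlacingBox p α x <;>
    simp [Set.indicator, hmem, hx, ha, hy, hcomp]

lemma HasMarginalDensity.glue [Fintype ι] [Fintype κ] {r : ι → ι → Prop} {r' : κ → κ → Prop}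
    {d : Fin p → ι} {w : (Fin p → ℝ) → ℝ} (hd : HasMarginalDensity r d w) (hw : Continuous w)
    (hw_nonneg : ∀ y ∈ orderedSimplex p, 0 ≤ w y) (e : ι ⊕ Fin q ≃ κ) {α : ℕ}
    (hpq : q + α ≤ p + 1)
    (hmem : ∀ a x, Sum.elim a x ∘ e.symm ∈ orderPolytope r' ↔
      a ∈ orderPolytope r ∧ x ∈ Set.Icc 0 1 ∧ a ∘ d ∈ interlacingBox p α x)
    {w' : (Fin q → ℝ) → ℝ}
    (hint : ∀ x ∈ orderedSimplex q, ∫ y in interlacingBox p α x, w y = w' x) :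
    HasMarginalDensity r' (e ∘ .inr) w' := by
  intro g hg
  have hr := measurableSet_orderPolytope r
  have hr' := measurableSet_orderPolytope r'
  have hge : Measurable fun T : κ → ℝ ↦ g (T ∘ e ∘ .inr) := hg.comp (by fun_prop)
  rw [← lintegral_indicator hr', lintegral_pi_eq_lintegral_sum_elim e (hge.indicator hr'),
    ← lintegral_indicator (measurableSet_orderedSimplex q)]
  refine lintegral_congr fun x ↦ ?_
  by_cases hx : x ∈ Set.Icc 0 1
  · have hbox : Measurable ((interlacingBox p α x).indicator (1 : (Fin p → ℝ) → ℝ≥0∞)) :=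
      measurable_one.indicator measurableSet_Icc
    have hboxd : Measurable fun a : ι → ℝ ↦
        (interlacingBox p α x).indicator (1 : (Fin p → ℝ) → ℝ≥0∞) (a ∘ d) :=
      hbox.comp (by fun_prop)
    simp_rw [indicator_orderPolytope_sumElim e hx (hmem · x)]
    rw [lintegral_const_mul _ (hboxd.indicator hr), lintegral_indicator hr,
      hd _ hbox, setLIntegral_indicator_interlacingBox hpq hw hw_nonneg hint hx]
    by_cases hx' : x ∈ orderedSimplex q <;> simp [hx']
  · have hx' : x ∉ orderedSimplex q := fun h ↦ hx h.1
    rw [Set.indicator_of_notMem hx']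
    simp [Set.indicator, hmem, hx]

end Gluing

section TruncatedRectangle

variable {p q a b α τ σ : ℕ}

/-- The shape with `p + b` rows and `p + a` columns whose upper right corner beyond the diagonal
`j = i + a` is removed; the diagonal itself has `p` cells and is kept. -/
def truncRect (p a b : ℕ) : Finset (ℕ × ℕ) :=
  {c ∈ range (p + b) ×ˢ range (p + a) | c.2 ≤ c.1 + a}

/-- The strict order of two cells of `D` in a common row or column, which a standard tableau
preserves. -/
def RowColLT (D : Finset (ℕ × ℕ)) (c c' : D) : Prop :=
  (c.1.1 = c'.1.1 ∧ c.1.2 < c'.1.2) ∨ (c.1.2 = c'.1.2 ∧ c.1.1 < c'.1.1)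

lemma mem_truncRect {c : ℕ × ℕ} :
    c ∈ truncRect p a b ↔ (c.1 < p + b ∧ c.2 < p + a) ∧ c.2 ≤ c.1 + a := by
  simp [truncRect]

/-- The cells of the outermost diagonal of `truncRect p a b`, from top left to bottom right. -/
def diagCell (p a b : ℕ) (u : Fin p) : truncRect p a b :=
  ⟨(u, u + a), mem_truncRect.2 (by simp only; omega)⟩

lemma sytCard_eq_factorial_mul_volume (D : Finset (ℕ × ℕ)) :
    (sytCard D : ℝ≥0∞) = (#D)! * volume (orderPolytope (RowColLT D)) := by
  rw [← card_linearExtensions (by simp [RowColLT]) (Fintype.card_coe D), sytCard]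
  simp only [RowColLT, or_imp, and_imp]
  congr!

/- The new diagonal lies one column to the right of the old one if `α = 1`, while the old shape
moves down by `σ = 1` if `α = 0`; it stops at the last column of the old shape if `τ = 1` and
reaches a new column if `τ = 0`. -/
lemma exists_equiv_truncRect (hσ : σ + α = 1) (hτ : τ ≤ 1) (hq : q + α + τ = p + 1)
    (ha : α = 0 → a = 0) (hb : τ = 0 → b = 0) :
    ∃ e : truncRect p a b ⊕ Fin q ≃ truncRect q (a + α) (b + τ),
      (∀ c, (e (.inl c) : ℕ × ℕ) = (c.1.1 + σ, c.1.2)) ∧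
        e ∘ .inr = diagCell q (a + α) (b + τ) := by
  have hmem (c : truncRect p a b) : (c.1.1 + σ, c.1.2) ∈ truncRect q (a + α) (b + τ) := by
    have := mem_truncRect.1 c.2
    rw [mem_truncRect]
    grind
  let f : truncRect p a b ⊕ Fin q → truncRect q (a + α) (b + τ) :=
    Sum.elim (fun c ↦ ⟨_, hmem c⟩) (diagCell q (a + α) (b + τ))
  have hf : Function.Bijective f := by
    constructor
    · rintro (⟨c, hc⟩ | u) (⟨c', hc'⟩ | u') h <;>
        simp only [f, Sum.elim_inl, Sum.elim_inr, diagCell, Subtype.ext_iff, Prod.ext_iff] at h <;>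
        grind [mem_truncRect]
    · rintro ⟨⟨i, j⟩, hc⟩
      have hc' := mem_truncRect.1 hc
      by_cases h : j = i + (a + α)
      · exact ⟨.inr ⟨i, by grind⟩, by simp [f, diagCell, h]⟩
      · refine ⟨.inl ⟨(i - σ, j), mem_truncRect.2 ?_⟩, ?_⟩
        · grind
        · simp only [f, Sum.elim_inl, Subtype.mk.injEq, Prod.mk.injEq, and_true]
          grind
  exact ⟨.ofBijective f hf, fun _ ↦ rfl, rfl⟩

lemma sumElim_mem_orderPolytope_truncRect_iff (hσ : σ + α = 1) (hq : q + α + τ = p + 1)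
    (e : truncRect p a b ⊕ Fin q ≃ truncRect q (a + α) (b + τ))
    (he : ∀ c, (e (.inl c) : ℕ × ℕ) = (c.1.1 + σ, c.1.2))
    (he' : e ∘ .inr = diagCell q (a + α) (b + τ)) (hτ : τ ≤ 1)
    (t : truncRect p a b → ℝ) (x : Fin q → ℝ) :
    Sum.elim t x ∘ e.symm ∈ orderPolytope (RowColLT (truncRect q (a + α) (b + τ))) ↔
      t ∈ orderPolytope (RowColLT (truncRect p a b)) ∧ x ∈ Set.Icc 0 1 ∧
        t ∘ diagCell p a b ∈ interlacingBox p α x := by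
  have he'v (v : Fin q) : (e (.inr v) : ℕ × ℕ) = (↑v, ↑v + (a + α)) :=
    congrArg Subtype.val (congrFun he' v)
  rw [mem_orderPolytope_sum_iff e (diagCell p a b) (r := RowColLT (truncRect p a b))
    (fun u v ↦ (v + α : ℕ) = u + 1) (fun u v ↦ (u : ℕ) = v + α)]
  · refine and_congr_right fun ht ↦ and_congr_right fun _ ↦ ?_
    have hd : t ∘ diagCell p a b ∈ Set.Icc 0 1 := ⟨fun u ↦ ht.1.1 _, fun u ↦ ht.1.2 _⟩
    exact (mem_interlacingBox_iff (by omega) (by omega) hd).symm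
  · simp [RowColLT, he]
  · simp only [RowColLT, he'v]
    omega
  · rintro ⟨c, hc⟩ v
    rw [mem_truncRect] at hc
    simp only [RowColLT, he, he'v, diagCell, Subtype.mk.injEq, Prod.ext_iff]
    constructor
    · intro h
      exact ⟨⟨v + α - 1, by omega⟩, by grind⟩
    · grind
  · rintro ⟨c, hc⟩ v
    rw [mem_truncRect] at hc
    simp only [RowColLT, he, he'v, diagCell, Subtype.mk.injEq, Prod.ext_iff]
    constructor
    · intro h
      exact ⟨⟨v + α, by omega⟩, by grind⟩
    · grind

lemma HasMarginalDensity.add_diagonal (hσ : σ + α = 1) (hτ : τ ≤ 1) (hq : q + α + τ = p + 1)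
    (ha : α = 0 → a = 0) (hb : τ = 0 → b = 0) {C C' : ℝ} (hC : 0 ≤ C)
    (h : HasMarginalDensity (RowColLT (truncRect p a b)) (diagCell p a b)
      fun y ↦ C * selbergWeight p a b y)
    (hint : ∀ x ∈ orderedSimplex q, ∫ y in interlacingBox p α x, selbergWeight p a b y =
      C' * selbergWeight q (a + α) (b + τ) x) :
    HasMarginalDensity (RowColLT (truncRect q (a + α) (b + τ))) (diagCell q (a + α) (b + τ))
      fun x ↦ C * C' * selbergWeight q (a + α) (b + τ) x := by
  obtain ⟨e, he, he'⟩ := exists_equiv_truncRect (p := p) (a := a) (b := b) hσ hτ hq ha hb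
  rw [← he']
  refine h.glue ((continuous_selbergWeight p a b).const_mul C)
    (fun y hy ↦ mul_nonneg hC (selbergWeight_nonneg a b hy)) e (by omega)
    (sumElim_mem_orderPolytope_truncRect_iff hσ hq e he he' hτ) fun x hx ↦ ?_
  rw [integral_const_mul, hint x hx, mul_assoc]

/-- The constant relating the law of the outermost diagonal of `truncRect p a b` to
`selbergWeight p a b`. -/
def diagConst (p a b : ℕ) : ℝ :=
  (∏ t ∈ range a, (t ! : ℝ)) * (∏ t ∈ range b, (t ! : ℝ)) / ∏ t ∈ range (p + a + b), (t ! : ℝ)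

lemma diagConst_pos (p a b : ℕ) : 0 < diagConst p a b := by
  unfold diagConst
  positivity

lemma hasMarginalDensity_truncRect_zero :
    HasMarginalDensity (RowColLT (truncRect 0 0 0)) (diagCell 0 0 0)
      fun y ↦ diagConst 0 0 0 * selbergWeight 0 0 0 y := by
  intro g _
  have : IsEmpty (truncRect 0 0 0) := ⟨fun c ↦ (mem_truncRect.1 c.2).1.1.not_ge (Nat.zero_le _)⟩
  have hpolytope : orderPolytope (RowColLT (truncRect 0 0 0)) = Set.univ :=
    Set.eq_univ_of_forall fun t ↦ by simp [orderPolytope]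
  rw [hpolytope, orderedSimplex_zero, Measure.restrict_univ, Measure.restrict_univ,
    Measure.volume_pi_eq_dirac isEmptyElim, Measure.volume_pi_eq_dirac isEmptyElim]
  simp [diagConst, selbergWeight, Subsingleton.elim (_ ∘ _) (isEmptyElim : Fin 0 → ℝ)]

theorem hasMarginalDensity_truncRect (p a b : ℕ) :
    HasMarginalDensity (RowColLT (truncRect p a b)) (diagCell p a b)
      fun y ↦ diagConst p a b * selbergWeight p a b y :=
  match p, a, b with
  | 0, 0, 0 => hasMarginalDensity_truncRect_zero
  | p + 1, 0, 0 => by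
    have h := (hasMarginalDensity_truncRect p 0 0).add_diagonal (σ := 1) (α := 0) (τ := 0)
      rfl zero_le_one rfl (by simp) (by simp) (diagConst_pos p 0 0).le
      fun x hx ↦ setIntegral_selbergWeight_of_interior hx
    convert h using 3
    simp [diagConst, prod_range_succ]; field_simp
  | p, a + 1, 0 => by
    have h := (hasMarginalDensity_truncRect p a 0).add_diagonal (σ := 0) (α := 1) (τ := 0)
      rfl zero_le_one rfl (by simp) (by simp) (diagConst_pos p a 0).le
      fun x hx ↦ setIntegral_selbergWeight_of_left a hx
    convert h using 3
    simp [diagConst, ← add_assoc, prod_range_succ, add_comm a p]; field_simp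
  | p, 0, b + 1 => by
    have h := (hasMarginalDensity_truncRect p 0 b).add_diagonal (σ := 1) (α := 0) (τ := 1)
      rfl le_rfl rfl (by simp) (by simp) (diagConst_pos p 0 b).le
      fun x hx ↦ setIntegral_selbergWeight_of_right b hx
    convert h using 3
    simp [diagConst, ← add_assoc, prod_range_succ, add_comm b p]; field_simp
  | p, a + 1, b + 1 => by
    have h := (hasMarginalDensity_truncRect (p + 1) a b).add_diagonal (σ := 0) (α := 1) (τ := 1)
      rfl le_rfl rfl (by simp) (by simp) (diagConst_pos (p + 1) a b).le
      fun x hx ↦ setIntegral_selbergWeight_of_left_right a b hx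
    convert h using 3
    simp only [diagConst, prod_range_succ, show p + (a + 1) + (b + 1) = p + 1 + a + b + 1 by ring,
      show a + b + 1 + p = p + 1 + a + b by ring]
    field_simp
termination_by p + 2 * (a + b)

/-- The Selberg integral with exponents `a`, `b` and `γ = 1 / 2`, over the ordered simplex. -/
def selbergIntegral (p a b : ℕ) : ℝ :=
  ∫ x in orderedSimplex p, selbergWeight p a b x

lemma card_truncRect_add_choose (p a b : ℕ) :
    #(truncRect p a b) + p.choose 2 = (p + b) * (p + a) := by
  have htriangle : #((range p).sigma range) = p.choose 2 := by
    simp [card_sigma, sum_range_id, Nat.choose_two_right]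
  have hrect : (p + b) * (p + a) = #(range (p + b) ×ˢ range (p + a)) := by simp
  rw [hrect, ← htriangle, truncRect, ← card_filter_add_card_filter_not
    (s := range (p + b) ×ˢ range (p + a)) (fun c : ℕ × ℕ ↦ c.2 ≤ c.1 + a)]
  congr 1
  refine card_nbij' (fun c : (_ : ℕ) × ℕ ↦ (c.2, c.1 + a)) (fun c ↦ ⟨c.2 - a, c.1⟩) ?_ ?_ ?_ ?_
  · rintro ⟨j, i⟩ h
    simp only [coe_sigma, coe_filter] at h ⊢
    grind
  · rintro ⟨i, j⟩ h
    simp only [coe_sigma, coe_filter] at h ⊢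
    grind
  · exact fun _ _ ↦ by simp
  · rintro ⟨i, j⟩ h
    simp only [coe_filter] at h
    grind

theorem sytCard_truncRect (p a b : ℕ) :
    (sytCard (truncRect p a b) : ℝ) =
      (#(truncRect p a b))! * (diagConst p a b * selbergIntegral p a b) := by
  have hvol := volume_orderPolytope_of_hasMarginalDensity (hasMarginalDensity_truncRect p a b)
    ((continuous_selbergWeight p a b).const_mul _)
    fun y hy ↦ mul_nonneg (diagConst_pos p a b).le (selbergWeight_nonneg a b hy)
  have hnonneg : 0 ≤ ∫ y in orderedSimplex p, diagConst p a b * selbergWeight p a b y :=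
    setIntegral_nonneg (measurableSet_orderedSimplex p) fun y hy ↦
      mul_nonneg (diagConst_pos p a b).le (selbergWeight_nonneg a b hy)
  rw [← ENNReal.toReal_natCast, sytCard_eq_factorial_mul_volume, hvol, ENNReal.toReal_mul,
    ENNReal.toReal_natCast, ENNReal.toReal_ofReal hnonneg, integral_const_mul, selbergIntegral]

end TruncatedRectangle

section ElementarySymmetricGenerating

open Polynomial

variable {ι R K : Type*} [CommRing R] [Field K]

/-- The generating polynomial `∏ j ∈ s, (1 + x j * X)` of the elementary symmetric functions of the
family `x` restricted to `s`. -/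
def esymmGen (s : Finset ι) (x : ι → R) : R[X] :=
  ∏ j ∈ s, (1 + C (x j) * X)

lemma coeff_esymmGen (s : Finset ι) (x : ι → R) (k : ℕ) :
    (esymmGen s x).coeff k = ∑ t ∈ s.powersetCard k, ∏ j ∈ t, x j := by
  have hcoeff (t : Finset ι) :
      (∏ j ∈ t, C (x j) * X).coeff k = if #t = k then ∏ j ∈ t, x j else 0 := by
    rw [prod_mul_distrib, prod_const, ← map_prod, coeff_C_mul_X_pow]
    simp only [eq_comm]
  simp_rw [esymmGen, prod_one_add, finsetSum_coeff, hcoeff, ← sum_filter,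
    powersetCard_eq_filter]

variable [DecidableEq ι] {s : Finset ι} {i : ι}

lemma one_add_mul_esymmGen_erase (hi : i ∈ s) (x : ι → R) :
    (1 + C (x i) * X) * esymmGen (s.erase i) x = esymmGen s x :=
  mul_prod_erase s (fun j ↦ 1 + C (x j) * X) hi

lemma derivative_esymmGen (s : Finset ι) (x : ι → R) :
    derivative (esymmGen s x) = ∑ i ∈ s, C (x i) * esymmGen (s.erase i) x := by
  simp only [esymmGen, derivative_prod_finset, derivative_add, derivative_one, zero_add,
    derivative_C_mul, derivative_X, mul_one]
  exact sum_congr rfl fun i _ ↦ mul_comm _ _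

lemma sum_esymmGen_erase (s : Finset ι) (x : ι → R) :
    ∑ i ∈ s, esymmGen (s.erase i) x =
      (#s : R[X]) * esymmGen s x - X * derivative (esymmGen s x) := by
  rw [derivative_esymmGen, mul_sum, ← nsmul_eq_mul, ← sum_const, ← sum_sub_distrib]
  refine sum_congr rfl fun i hi ↦ ?_
  rw [← one_add_mul_esymmGen_erase hi x]
  ring

lemma sum_sum_mul_esymmGen_erase_erase (s : Finset ι) (x : ι → R) :
    ∑ i ∈ s, ∑ j ∈ s.erase i, C (x i) * esymmGen ((s.erase i).erase j) x =
      ((#s : R[X]) - 1) * derivative (esymmGen s x) -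
        X * derivative (derivative (esymmGen s x)) := by
  conv_rhs => rw [derivative_esymmGen]
  rw [derivative_sum, mul_sum, mul_sum, ← sum_sub_distrib]
  refine sum_congr rfl fun i hi ↦ ?_
  rw [← mul_sum, sum_esymmGen_erase, cast_card_erase_of_mem hi, derivative_C_mul]
  ring

lemma sum_sum_erase_comm {M : Type*} [AddCommMonoid M] (s : Finset ι) (f : ι → ι → M) :
    ∑ i ∈ s, ∑ j ∈ s.erase i, f i j = ∑ i ∈ s, ∑ j ∈ s.erase i, f j i :=
  sum_comm' fun i j ↦ by grind

lemma sum_sum_esymmGen_erase_erase (s : Finset ι) (x : ι → R) :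
    ∑ i ∈ s, ∑ j ∈ s.erase i, esymmGen ((s.erase i).erase j) x =
      ((#s : R[X]) - 1) * ((#s : R[X]) * esymmGen s x - 2 * X * derivative (esymmGen s x)) +
        X ^ 2 * derivative (derivative (esymmGen s x)) := by
  have hinner (i) (hi : i ∈ s) : ∑ j ∈ s.erase i, esymmGen ((s.erase i).erase j) x =
      ((#s : R[X]) - 1) * esymmGen (s.erase i) x -
        X * ∑ j ∈ s.erase i, C (x j) * esymmGen ((s.erase i).erase j) x := by
    rw [sum_esymmGen_erase, cast_card_erase_of_mem hi, derivative_esymmGen]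
  rw [sum_congr rfl hinner, sum_sub_distrib, ← mul_sum, ← mul_sum, sum_esymmGen_erase,
    sum_sum_erase_comm]
  simp_rw [erase_right_comm (s := s)]
  rw [sum_sum_mul_esymmGen_erase_erase]
  ring

lemma symm_div_sub_mul_esymmGen_erase {x : ι → K} (hx : Set.InjOn x s) {j : ι} (hi : i ∈ s)
    (hj : j ∈ s.erase i) :
    C (x i * (1 - x i) / (x i - x j)) * esymmGen (s.erase i) x +
        C (x j * (1 - x j) / (x j - x i)) * esymmGen (s.erase j) x =
      (1 - C (x i) - C (x j) - X * C (x i) * C (x j)) * esymmGen ((s.erase i).erase j) x := by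
  have hji : j ≠ i := (mem_erase.1 hj).1
  have hsub : x i - x j ≠ 0 := sub_ne_zero.2 fun h ↦ hji (hx hi (mem_erase.1 hj).2 h).symm
  have hsub' : x j - x i ≠ 0 := by rwa [← neg_sub, neg_ne_zero]
  have hconst : x i * (1 - x i) / (x i - x j) + x j * (1 - x j) / (x j - x i) =
      1 - x i - x j := by
    field_simp
    ring
  have hlinear : x i * (1 - x i) / (x i - x j) * x j + x j * (1 - x j) / (x j - x i) * x i =
      -(x i * x j) := by
    field_simp
    ring
  rw [← one_add_mul_esymmGen_erase hj, ← one_add_mul_esymmGen_erase (mem_erase.2 ⟨hji.symm, hi⟩),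
    erase_right_comm (a := j)]
  have hconst' := congrArg (C : K → K[X]) hconst
  have hlinear' := congrArg (C : K → K[X]) hlinear
  simp only [map_add, map_sub, map_mul, map_neg, map_one] at hconst' hlinear' ⊢
  linear_combination (hconst' + X * hlinear') * esymmGen ((s.erase i).erase j) x

lemma two_mul_sum_div_sub_mul_esymmGen_erase {x : ι → K} (hx : Set.InjOn x s) :
    2 * ∑ i ∈ s, ∑ j ∈ s.erase i, C (x i * (1 - x i) / (x i - x j)) * esymmGen (s.erase i) x =
      (#s : K[X]) * ((#s : K[X]) - 1) * esymmGen s x -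
        2 * ((#s : K[X]) - 1) * (X + 1) * derivative (esymmGen s x) +
        X * (X + 1) * derivative (derivative (esymmGen s x)) := by
  have hsnd : ∑ i ∈ s, ∑ j ∈ s.erase i, C (x j) * esymmGen ((s.erase i).erase j) x =
      ((#s : K[X]) - 1) * derivative (esymmGen s x) -
        X * derivative (derivative (esymmGen s x)) := by
    rw [sum_sum_erase_comm, ← sum_sum_mul_esymmGen_erase_erase]
    simp_rw [erase_right_comm (s := s)]
  have hprod : ∑ i ∈ s, ∑ j ∈ s.erase i, X * C (x i) * C (x j) * esymmGen ((s.erase i).erase j) x =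
      X * derivative (derivative (esymmGen s x)) := by
    simp_rw [derivative_esymmGen s, derivative_sum, derivative_C_mul, derivative_esymmGen, mul_sum,
      mul_assoc]
  rw [two_mul]
  nth_rw 2 [sum_sum_erase_comm]
  simp_rw [← sum_add_distrib]
  rw [sum_congr rfl fun i hi ↦ sum_congr rfl fun j hj ↦
    symm_div_sub_mul_esymmGen_erase hx hi hj]
  simp_rw [sub_mul, one_mul, sum_sub_distrib]
  rw [sum_sum_esymmGen_erase_erase, sum_sum_mul_esymmGen_erase_erase, hsnd, hprod]
  ring

lemma coeff_X_mul_derivative (p : R[X]) (k : ℕ) : (X * derivative p).coeff k = k * p.coeff k := by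
  cases k with
  | zero => simp
  | succ k => simp [coeff_derivative, mul_comm]

lemma two_mul_sum_mul_coeff_esymmGen_erase {x : ι → K} (hx : Set.InjOn x s) (A B : K) (k : ℕ) :
    2 * ∑ i ∈ s, (A - B * x i + ∑ j ∈ s.erase i, x i * (1 - x i) / (x i - x j)) *
        (esymmGen (s.erase i) x).coeff k =
      (2 * A + (#s - k - 1)) * (#s - k) * (esymmGen s x).coeff k -
        (2 * B + (2 * #s - 2 - k)) * (k + 1) * (esymmGen s x).coeff (k + 1) := by
  have hone := congrArg (coeff · k) (sum_esymmGen_erase s x)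
  have hlinear := congrArg (coeff · k) (derivative_esymmGen s x)
  have hfrac := congrArg (coeff · k) (two_mul_sum_div_sub_mul_esymmGen_erase hx)
  have heuler (E : K[X]) : (#s : K[X]) * ((#s : K[X]) - 1) * E -
        2 * ((#s : K[X]) - 1) * (X + 1) * derivative E +
        X * (X + 1) * derivative (derivative E) =
      C (#s * (#s - 1) : K) * E - C (2 * (#s - 1) : K) * (X * derivative E + derivative E) +
        (X * derivative (X * derivative E) - X * derivative E) + X * derivative (derivative E) := by
    simp only [map_mul, map_sub, map_natCast, map_ofNat, map_one, derivative_mul, derivative_X]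
    ring
  rw [heuler] at hfrac
  simp only [two_mul, coeff_sub, coeff_add, coeff_natCast_mul, coeff_C_mul, finsetSum_coeff,
    coeff_X_mul_derivative, coeff_derivative] at hone hlinear hfrac
  simp only [add_mul, sub_mul, sum_add_distrib, sum_sub_distrib, sum_mul, mul_assoc, ← mul_sum]
  linear_combination 2 * A * hone + 2 * B * hlinear + hfrac

end ElementarySymmetricGenerating

section SlicedSimplex

variable {p : ℕ}

lemma mem_Icc_padded_iff {y : Fin p → ℝ} (hy : y ∈ orderedSimplex p) (i : Fin (p + 1)) (t : ℝ) :
    t ∈ Set.Icc (padded 1 y i) (padded 1 y (i + 1)) ↔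
      t ∈ Set.Icc 0 1 ∧ ∀ j : Fin p, (j.castSucc < i → y j ≤ t) ∧ (i ≤ j.castSucc → t ≤ y j) := by
  constructor
  · refine fun ht ↦ ⟨⟨(padded_mem_Icc hy.1 1 i).1.trans ht.1,
      ht.2.trans (padded_mem_Icc hy.1 1 _).2⟩, fun j ↦ ⟨fun hj ↦ ?_, fun hj ↦ ?_⟩⟩
    · rw [← padded_add 1 y j]
      exact (monotone_padded hy 1 (Nat.succ_le_of_lt hj)).trans ht.1
    · rw [← padded_add 1 y j]
      exact ht.2.trans (monotone_padded hy 1 (Nat.succ_le_succ hj))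
  · rintro ⟨ht, hyt⟩
    constructor
    · obtain hi | ⟨j, hj⟩ : (i : ℕ) < 1 ∨ ∃ j : Fin p, (i : ℕ) = j + 1 :=
        (Nat.lt_or_ge i 1).imp_right fun hi ↦ ⟨⟨i - 1, by omega⟩, by simp; omega⟩
      · exact (padded_of_lt y hi).trans_le ht.1
      · rw [hj, padded_add]
        exact (hyt j).1 (by simp [Fin.lt_def, hj])
    · obtain hi | hi := lt_or_ge (i : ℕ) p
      · exact ((hyt ⟨i, hi⟩).2 le_rfl).trans_eq (padded_add 1 y ⟨i, hi⟩).symm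
      · exact ht.2.trans_eq (padded_of_le y (by omega)).symm

lemma monotone_insertNth_iff {α : Type*} [Preorder α] (i : Fin (p + 1)) (t : α) (y : Fin p → α) :
    Monotone (i.insertNth t y : Fin (p + 1) → α) ↔
      Monotone y ∧ ∀ j : Fin p, (j.castSucc < i → y j ≤ t) ∧ (i ≤ j.castSucc → t ≤ y j) := by
  constructor
  · refine fun h ↦ ⟨fun j k hjk ↦ ?_, fun j ↦ ⟨fun hj ↦ ?_, fun hj ↦ ?_⟩⟩
    · simpa using h ((Fin.strictMono_succAbove i).monotone hjk)
    · simpa using h ((Fin.succAbove_lt_iff_castSucc_lt i j).2 hj).le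
    · simpa using h ((Fin.lt_succAbove_iff_le_castSucc i j).2 hj).le
  · rintro ⟨hy, hyt⟩
    refine monotone_iff_forall_lt.2 fun j k hjk ↦ ?_
    cases j using Fin.succAboveCases i <;> cases k using Fin.succAboveCases i
    · exact absurd hjk (lt_irrefl i)
    · simpa using (hyt _).2 ((Fin.lt_succAbove_iff_le_castSucc i _).1 hjk)
    · simpa using (hyt _).1 ((Fin.succAbove_lt_iff_castSucc_lt i _).1 hjk)
    · simpa using hy ((Fin.strictMono_succAbove i).lt_iff_lt.1 hjk).le

lemma insertNth_mem_orderedSimplex_iff (i : Fin (p + 1)) (t : ℝ) (y : Fin p → ℝ) :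
    (i.insertNth t y : Fin (p + 1) → ℝ) ∈ orderedSimplex (p + 1) ↔
      y ∈ orderedSimplex p ∧ t ∈ Set.Icc (padded 1 y i) (padded 1 y (i + 1)) := by
  have hmem {q : ℕ} (x : Fin q → ℝ) : x ∈ orderedSimplex q ↔ x ∈ Set.Icc 0 1 ∧ Monotone x := Iff.rfl
  have hIcc : (i.insertNth t y : Fin (p + 1) → ℝ) ∈ Set.Icc 0 1 ↔
      t ∈ Set.Icc 0 1 ∧ y ∈ Set.Icc 0 1 := Fin.insertNth_mem_Icc
  rw [hmem, hIcc, monotone_insertNth_iff]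
  constructor
  · rintro ⟨⟨ht, hy⟩, hmono, hyt⟩
    exact ⟨⟨hy, hmono⟩, (mem_Icc_padded_iff ⟨hy, hmono⟩ i t).2 ⟨ht, hyt⟩⟩
  · rintro ⟨hy, ht⟩
    obtain ⟨ht, hyt⟩ := (mem_Icc_padded_iff hy i t).1 ht
    exact ⟨⟨ht, hy.1⟩, hy.2, hyt⟩

lemma integral_eq_integral_insertNth (i : Fin (p + 1)) {g : (Fin (p + 1) → ℝ) → ℝ}
    (hg : Integrable g) : ∫ x, g x = ∫ y, ∫ t, g (i.insertNth t y) := by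
  have hmp := (volume_preserving_piFinSuccAbove (fun _ : Fin (p + 1) ↦ ℝ) i).symm
  have hint := (hmp.integrable_comp_emb (MeasurableEquiv.measurableEmbedding _)).2 hg
  rw [← hmp.integral_comp', Measure.volume_eq_prod]
  exact integral_prod_symm _ hint

lemma integral_orderedSimplex_eq_zero_of_hasDerivAt (i : Fin (p + 1)) (f f' : ℝ → (Fin p → ℝ) → ℝ)
    (hf' : Continuous fun q : ℝ × (Fin p → ℝ) ↦ f' q.1 q.2)
    (hderiv : ∀ y t, HasDerivAt (fun t ↦ f t y) (f' t y) t)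
    (hzero : ∀ y, f 0 y = 0) (hone : ∀ y, f 1 y = 0) (hdiag : ∀ y j, f (y j) y = 0) :
    ∫ x in orderedSimplex (p + 1), f' (x i) (i.removeNth x) = 0 := by
  set g : (Fin (p + 1) → ℝ) → ℝ :=
    (orderedSimplex (p + 1)).indicator fun x ↦ f' (x i) (i.removeNth x)
  have hg : Integrable g := by
    have hcont : Continuous fun x : Fin (p + 1) → ℝ ↦ (x i, i.removeNth x) :=
      (continuous_apply i).prodMk (continuous_pi fun j ↦ continuous_apply (i.succAbove j))
    exact ((hf'.comp hcont).continuousOn.integrableOn_compact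
      (isCompact_orderedSimplex _)).integrable_indicator (measurableSet_orderedSimplex _)
  have hpadded (y : Fin p → ℝ) (k : ℕ) : f (padded 1 y k) y = 0 := by
    unfold padded
    split_ifs
    exacts [hzero y, hdiag y _, hone y]
  have hslice (y : Fin p → ℝ) : ∫ t, g (i.insertNth t y) = 0 := by
    by_cases hy : y ∈ orderedSimplex p
    · have hind (t : ℝ) : g (i.insertNth t y) =
          (Set.Icc (padded 1 y i) (padded 1 y (i + 1))).indicator (fun t ↦ f' t y) t := by
        simp [g, Set.indicator_apply, insertNth_mem_orderedSimplex_iff, hy]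
      simp_rw [hind]
      rw [integral_indicator measurableSet_Icc, integral_Icc_eq_integral_Ioc,
        ← intervalIntegral.integral_of_le (monotone_padded hy 1 (Nat.le_succ _)),
        intervalIntegral.integral_eq_sub_of_hasDerivAt (fun t _ ↦ hderiv y t)
          ((hf'.comp (by fun_prop : Continuous fun t ↦ (t, y))).intervalIntegrable _ _),
        hpadded, hpadded, sub_zero]
    · have hnot (t : ℝ) : g (i.insertNth t y) = 0 :=
        Set.indicator_of_notMem (fun h ↦ hy ((insertNth_mem_orderedSimplex_iff i t y).1 h).1) _
      simp [hnot]
  rw [← integral_indicator (measurableSet_orderedSimplex _), integral_eq_integral_insertNth i hg]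
  simp_rw [hslice, integral_zero]

end SlicedSimplex

section SelbergRecursion

variable {p : ℕ}

lemma univ_erase_eq_map_succAboveEmb (i : Fin (p + 1)) :
    univ.erase i = univ.map i.succAboveEmb := by
  rw [Fin.univ_succAbove p i, erase_cons]

lemma esymmGen_removeNth {R : Type*} [CommRing R] (i : Fin (p + 1)) (x : Fin (p + 1) → R) :
    esymmGen univ (i.removeNth x) = esymmGen (univ.erase i) x := by
  rw [esymmGen, esymmGen, univ_erase_eq_map_succAboveEmb, prod_map]
  rfl

lemma continuous_coeff_esymmGen {ι : Type*} (s : Finset ι) (k : ℕ) :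
    Continuous fun x : ι → ℝ ↦ (esymmGen s x).coeff k := by
  simp only [coeff_esymmGen]
  fun_prop

lemma det_vandermonde_cons {R : Type*} [CommRing R] (t : R) (y : Fin p → R) :
    (Matrix.vandermonde (Fin.cons t y : Fin (p + 1) → R)).det =
      (∏ j, (y j - t)) * (Matrix.vandermonde y).det := by
  simp only [Matrix.det_vandermonde, Fin.prod_univ_succ, Fin.prod_Ioi_zero, Fin.prod_Ioi_succ,
    Fin.cons_succ, Fin.cons_zero]

lemma det_vandermonde_insertNth {R : Type*} [CommRing R] (i : Fin (p + 1)) (t : R)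
    (y : Fin p → R) :
    (Matrix.vandermonde (i.insertNth t y : Fin (p + 1) → R)).det =
      (-1) ^ (i : ℕ) * ((∏ j, (y j - t)) * (Matrix.vandermonde y).det) := by
  have hperm :=
    Matrix.det_permute i.cycleRange (Matrix.vandermonde (Fin.cons t y : Fin (p + 1) → R))
  have hcycle : (Fin.cons t y : Fin (p + 1) → R) ∘ i.cycleRange = i.insertNth t y := by
    rw [← Fin.insertNth_comp_cycleRange_symm i t y, Function.comp_assoc, Equiv.symm_comp_self,
      Function.comp_id]
  rw [det_vandermonde_cons, Fin.sign_cycleRange] at hperm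
  rw [← hcycle]
  exact_mod_cast hperm

lemma selbergWeight_eq_removeNth (a b : ℕ) (i : Fin (p + 1)) (x : Fin (p + 1) → ℝ) :
    selbergWeight (p + 1) a b x = (-1) ^ (i : ℕ) * ((∏ j, (x (i.succAbove j) - x i)) *
      (x i ^ a * (1 - x i) ^ b) * selbergWeight p a b (i.removeNth x)) := by
  have hdet := det_vandermonde_insertNth i (x i) (i.removeNth x)
  rw [Fin.insertNth_self_removeNth] at hdet
  rw [selbergWeight, selbergWeight, hdet, Fin.prod_univ_succAbove _ i]
  simp only [Fin.removeNth]
  ring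

/-- The derivative in `t` of `eₖ(y) * selbergWeight p a b y * t ^ (a + 1) * (1 - t) ^ (b + 1) *
∏ j, (y j - t)`. Up to a sign, this is the `i`-th term of the divergence of Aomoto's vector field
`x i * (1 - x i) * eₖ(y) * selbergWeight (p + 1) a b x`, where `t = x i` and `y` consists of the
other coordinates of `x`. -/
def aomotoDerivative (p a b k : ℕ) (t : ℝ) (y : Fin p → ℝ) : ℝ :=
  (esymmGen univ y).coeff k * selbergWeight p a b y *
    (((a + 1) * t ^ a * (1 - t) ^ (b + 1) - (b + 1) * t ^ (a + 1) * (1 - t) ^ b) *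
      ∏ j, (y j - t) - t ^ (a + 1) * (1 - t) ^ (b + 1) * ∑ j, ∏ l ∈ univ.erase j, (y l - t))

lemma hasDerivAt_aomotoDerivative (a b k : ℕ) (y : Fin p → ℝ) (t : ℝ) :
    HasDerivAt (fun t ↦ (esymmGen univ y).coeff k * selbergWeight p a b y *
      (t ^ (a + 1) * (1 - t) ^ (b + 1) * ∏ j, (y j - t))) (aomotoDerivative p a b k t y) t := by
  have hprod : HasDerivAt (fun t ↦ ∏ j, (y j - t)) (-∑ j, ∏ l ∈ univ.erase j, (y l - t)) t := by
    refine (HasDerivAt.fun_finsetProd fun j _ ↦ (hasDerivAt_id' t).const_sub (y j)).congr_deriv ?_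
    simp
  refine (((hasDerivAt_pow_mul_one_sub_pow (a + 1) (b + 1) t).fun_mul hprod).const_mul
    _).congr_deriv ?_
  rw [aomotoDerivative]
  push_cast
  ring

lemma continuous_aomotoDerivative (p a b k : ℕ) :
    Continuous fun q : ℝ × (Fin p → ℝ) ↦ aomotoDerivative p a b k q.1 q.2 := by
  have hmul := (continuous_coeff_esymmGen (univ : Finset (Fin p)) k).mul
    (continuous_selbergWeight p a b)
  exact (hmul.comp continuous_snd).mul (by fun_prop)

lemma integral_aomotoDerivative (a b k : ℕ) (i : Fin (p + 1)) :
    ∫ x in orderedSimplex (p + 1), aomotoDerivative p a b k (x i) (i.removeNth x) = 0 := by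
  refine integral_orderedSimplex_eq_zero_of_hasDerivAt i _ _ (continuous_aomotoDerivative p a b k)
    (hasDerivAt_aomotoDerivative a b k) ?_ ?_ fun y j ↦ ?_
  · simp
  · simp
  · rw [prod_eq_zero (mem_univ j) (sub_self _)]
    simp

lemma integrableOn_aomotoDerivative (a b k : ℕ) (i : Fin (p + 1)) :
    IntegrableOn (fun x ↦ aomotoDerivative p a b k (x i) (i.removeNth x))
      (orderedSimplex (p + 1)) := by
  have hcont : Continuous fun x : Fin (p + 1) → ℝ ↦ (x i, i.removeNth x) :=
    (continuous_apply i).prodMk (continuous_pi fun j ↦ continuous_apply (i.succAbove j))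
  exact ((continuous_aomotoDerivative p a b k).comp hcont).continuousOn.integrableOn_compact
    (isCompact_orderedSimplex _)

lemma aomotoDerivative_eq (a b k : ℕ) (i : Fin (p + 1)) {x : Fin (p + 1) → ℝ}
    (hx : Function.Injective x) :
    (-1) ^ (i : ℕ) * aomotoDerivative p a b k (x i) (i.removeNth x) =
      selbergWeight (p + 1) a b x * ((a + 1 - (a + b + 2) * x i +
        ∑ j ∈ univ.erase i, x i * (1 - x i) / (x i - x j)) *
          (esymmGen (univ.erase i) x).coeff k) := by
  have hlog : ∑ j, ∏ l ∈ univ.erase j, (x (i.succAbove l) - x i) =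
      -((∏ j, (x (i.succAbove j) - x i)) * ∑ j, (x i - x (i.succAbove j))⁻¹) := by
    rw [mul_sum, ← sum_neg_distrib]
    refine sum_congr rfl fun j _ ↦ ?_
    have hne : x i - x (i.succAbove j) ≠ 0 := sub_ne_zero.2 (hx.ne (Fin.succAbove_ne i j).symm)
    rw [← mul_prod_erase univ _ (mem_univ j)]
    field_simp
    ring
  rw [aomotoDerivative, selbergWeight_eq_removeNth a b i x, esymmGen_removeNth,
    univ_erase_eq_map_succAboveEmb i, sum_map]
  simp only [Fin.removeNth, Fin.coe_succAboveEmb, hlog, div_eq_mul_inv, ← mul_sum]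
  ring

/-- Aomoto's average of the elementary symmetric function `eₖ` against `selbergWeight`. -/
def selbergMoment (p a b k : ℕ) : ℝ :=
  ∫ x in orderedSimplex p, (esymmGen univ x).coeff k * selbergWeight p a b x

lemma integrableOn_coeff_esymmGen_mul_selbergWeight (p a b k : ℕ) :
    IntegrableOn (fun x ↦ (esymmGen univ x).coeff k * selbergWeight p a b x) (orderedSimplex p) :=
  ((continuous_coeff_esymmGen univ k).mul
    (continuous_selbergWeight p a b)).continuousOn.integrableOn_compact (isCompact_orderedSimplex p)

lemma selbergMoment_zero (p a b : ℕ) : selbergMoment p a b 0 = selbergIntegral p a b := by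
  simp [selbergMoment, selbergIntegral, coeff_esymmGen]

lemma selbergMoment_self (p a b : ℕ) : selbergMoment p a b p = selbergIntegral p (a + 1) b := by
  have htop (x : Fin p → ℝ) :
      (esymmGen univ x).coeff p * selbergWeight p a b x = selbergWeight p (a + 1) b x := by
    have hself := powersetCard_self (univ : Finset (Fin p))
    rw [card_univ, Fintype.card_fin] at hself
    simp only [coeff_esymmGen, selbergWeight, hself, sum_singleton, pow_succ', mul_assoc,
      prod_mul_distrib]
    ring
  simp only [selbergMoment, selbergIntegral, htop]

lemma selbergMoment_succ (p a b k : ℕ) :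
    (2 * a + 2 + p - k) * (p + 1 - k) * selbergMoment (p + 1) a b k =
      (2 * a + 2 * b + 4 + 2 * p - k) * (k + 1) * selbergMoment (p + 1) a b (k + 1) := by
  have hdiv : ∫ x in orderedSimplex (p + 1), 2 * ∑ i : Fin (p + 1),
      (-1) ^ (i : ℕ) * aomotoDerivative p a b k (x i) (i.removeNth x) = 0 := by
    rw [integral_const_mul, integral_finsetSum _ fun i _ ↦
      (integrableOn_aomotoDerivative a b k i).const_mul _]
    simp only [integral_const_mul, integral_aomotoDerivative, mul_zero, sum_const_zero]
  have hae : ∀ᵐ x : Fin (p + 1) → ℝ, x ∈ orderedSimplex (p + 1) → 2 * ∑ i : Fin (p + 1),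
      (-1) ^ (i : ℕ) * aomotoDerivative p a b k (x i) (i.removeNth x) =
      (2 * a + 2 + p - k) * (p + 1 - k) *
          ((esymmGen univ x).coeff k * selbergWeight (p + 1) a b x) -
        (2 * a + 2 * b + 4 + 2 * p - k) * (k + 1) *
          ((esymmGen univ x).coeff (k + 1) * selbergWeight (p + 1) a b x) := by
    filter_upwards [ae_injective] with x hx _
    have haomoto := two_mul_sum_mul_coeff_esymmGen_erase (s := univ) hx.injOn
      (a + 1 : ℝ) (a + b + 2) k
    simp only [card_univ, Fintype.card_fin] at haomoto
    simp only [aomotoDerivative_eq a b k _ hx, ← mul_sum]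
    push_cast at haomoto
    linear_combination selbergWeight (p + 1) a b x * haomoto
  rw [setIntegral_congr_ae (measurableSet_orderedSimplex _) hae, integral_sub
    ((integrableOn_coeff_esymmGen_mul_selbergWeight _ a b k).const_mul _)
    ((integrableOn_coeff_esymmGen_mul_selbergWeight _ a b (k + 1)).const_mul _),
    integral_const_mul, integral_const_mul] at hdiv
  exact sub_eq_zero.1 hdiv

lemma selbergMoment_mul (p a b : ℕ) {k : ℕ} (hk : k ≤ p + 1) :
    selbergMoment (p + 1) a b k * (k ! * (2 * a + 2 * b + 2 * (p + 1) + 2).descFactorial k) =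
      selbergMoment (p + 1) a b 0 *
        ((p + 1).descFactorial k * (2 * a + 1 + (p + 1)).descFactorial k) := by
  induction k with
  | zero => simp
  | succ k ih =>
    have haomoto := selbergMoment_succ p a b k
    have ih := ih (Nat.le_of_succ_le hk)
    rw [Nat.factorial_succ, Nat.descFactorial_succ, Nat.descFactorial_succ, Nat.descFactorial_succ]
    push_cast [Nat.cast_sub (show k ≤ p + 1 by omega),
      Nat.cast_sub (show k ≤ 2 * a + 1 + (p + 1) by omega),
      Nat.cast_sub (show k ≤ 2 * a + 2 * b + 2 * (p + 1) + 2 by omega)]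
    linear_combination ((2 * a + 2 + p - k) * (p + 1 - k) : ℝ) * ih -
      (k ! * (2 * a + 2 * b + 2 * (p + 1) + 2).descFactorial k : ℝ) * haomoto

theorem selbergIntegral_succ (r a b : ℕ) :
    selbergIntegral r (a + 1) b * (2 * a + 2 * b + 2 * r + 2).descFactorial r =
      selbergIntegral r a b * (2 * a + 2).ascFactorial r := by
  cases r with
  | zero => simp [selbergIntegral, selbergWeight]
  | succ p =>
    have h := selbergMoment_mul p a b le_rfl
    rw [selbergMoment_self, selbergMoment_zero, Nat.descFactorial_self,
      Nat.add_descFactorial_eq_ascFactorial] at h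
    refine mul_left_cancel₀ (Nat.cast_ne_zero.2 (p + 1).factorial_ne_zero) ?_
    linear_combination h

end SelbergRecursion

section EFactor

variable {q r m s : ℕ}

lemma prod_Ioo_add_mul_factorial {a b : ℕ} (h : a ≤ b) (c : ℕ) :
    (∏ l ∈ Ioo a (b + 1), (l + c)) * (a + c)! = (b + c)! := by
  rw [Ioo_add_one_right_eq_Ioc]
  induction b, h using Nat.le_induction with
  | base => simp
  | succ b h ih =>
    rw [prod_Ioc_succ_top (by omega), mul_right_comm, ih, add_right_comm b 1 c, Nat.factorial_succ,
      mul_comm]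

lemma prod_Icc_two_add_two {f : ℕ → ℚ} (hf : f 1 = 1) (q : ℕ) :
    ∏ l ∈ Icc 2 (2 * q + 2), f l =
      (∏ l ∈ Icc 2 (2 * q), f l) * f (2 * q + 1) * f (2 * q + 2) := by
  cases q with
  | zero => simp [hf]
  | succ q => rw [prod_Icc_succ_top (by omega), prod_Icc_succ_top (by omega)]

lemma E1even_two_mul_add_two (h : 2 * q + 2 ≤ m) :
    E1even (2 * q + 2) m s =
      E1even (2 * q) m s * ((2 * q + 1 + 2 * s)! / (2 * m - 2 * q + 2 * s)!) := by
  obtain ⟨N, hN⟩ : ∃ N, 2 * m - 2 * q + 2 * s = N + 1 := ⟨2 * m - 2 * q + 2 * s - 1, by omega⟩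
  obtain ⟨M, hM⟩ : ∃ M, M = 2 * q + 2 * s := ⟨_, rfl⟩
  have houter : (∏ l ∈ Ioo (2 * q) (2 * m - 2 * q + 2), ((l + 2 * s : ℕ) : ℚ)) =
      (N + 1 + 1)! / M ! := by
    rw [eq_div_iff (by positivity), hM, show N + 1 + 1 = 2 * m - 2 * q + 1 + 2 * s by omega]
    exact_mod_cast prod_Ioo_add_mul_factorial (by omega) (2 * s)
  have hinner : (∏ l ∈ Ioo (2 * q + 2) (2 * m - (2 * q + 2) + 2), ((l + 2 * s : ℕ) : ℚ)) =
      N ! / (M + 1 + 1)! := by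
    rw [eq_div_iff (by positivity), show M + 1 + 1 = 2 * q + 2 + 2 * s by omega,
      show N = 2 * m - (2 * q + 2) + 1 + 2 * s by omega]
    exact_mod_cast prod_Ioo_add_mul_factorial (by omega) (2 * s)
  rw [E1even, E1even, prod_Icc_two_add_two (by simp), prod_pow, prod_pow, houter, hinner, hN,
    show 2 * q + 1 + 2 * s = M + 1 by omega, show 2 * q + 2 + 2 * s = M + 1 + 1 by omega,
    show 2 * m - (2 * q + 1) + 2 + 2 * s = N + 1 + 1 by omega,
    show 2 * m - (2 * q + 2) + 2 + 2 * s = N + 1 by omega, show (2 * q + 1) / 2 = q by omega,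
    show (2 * q + 2) / 2 = q + 1 by omega, show 2 * q / 2 = q by omega]
  simp only [Nat.factorial_succ]
  push_cast
  simp only [mul_pow, div_pow, pow_succ]
  field_simp

lemma E1even_two_mul (h : 2 * q ≤ m) :
    E1even (2 * q) m s =
      ∏ i ∈ range q, ((2 * i + 1 + 2 * s)! / (2 * m - 2 * i + 2 * s)! : ℚ) := by
  induction q with
  | zero => simp [E1even]
  | succ q ih => rw [mul_add_one, E1even_two_mul_add_two h, ih (by omega), prod_range_succ]

lemma E1_pos (h : r ≤ m) : 0 < E1 r m s := by
  obtain ⟨q, rfl | rfl⟩ := r.even_or_odd'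
  · rw [E1, if_pos (by omega), E1even_two_mul h]
    positivity
  · rw [E1, if_neg (by omega), Nat.add_sub_cancel, E1even_two_mul (by omega)]
    positivity

lemma E1even_two_mul_succ (h : 2 * q ≤ m) :
    E1even (2 * q) m (s + 1) * (2 * s + 2 * m + 2).descFactorial (2 * q) =
      E1even (2 * q) m s * (2 * s + 2).ascFactorial (2 * q) := by
  induction q with
  | zero => simp [E1even]
  | succ q ih =>
    have ih := ih (by omega)
    obtain ⟨N, hN⟩ : ∃ N, N = 2 * m - 2 * q + 2 * s := ⟨_, rfl⟩
    rw [mul_add_one, E1even_two_mul_add_two h, E1even_two_mul_add_two h, Nat.descFactorial_succ,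
      Nat.descFactorial_succ, Nat.ascFactorial_succ, Nat.ascFactorial_succ,
      show 2 * q + 1 + 2 * (s + 1) = 2 * q + 1 + 2 * s + 1 + 1 by ring,
      show 2 * m - 2 * q + 2 * (s + 1) = N + 1 + 1 by omega, ← hN,
      show 2 * s + 2 * m + 2 - (2 * q + 1) = N + 1 by omega,
      show 2 * s + 2 * m + 2 - 2 * q = N + 1 + 1 by omega]
    simp only [Nat.factorial_succ]
    push_cast
    field_simp
    linear_combination ((2 * s + 2 + 2 * q) * (2 * s + 2 + (2 * q + 1)) : ℚ) * ih

lemma E1_succ (h : r ≤ m) :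
    E1 r m (s + 1) * (2 * s + 2 * m + 2).descFactorial r =
      E1 r m s * (2 * s + 2).ascFactorial r := by
  obtain ⟨q, rfl | rfl⟩ := r.even_or_odd'
  · simpa [E1] using E1even_two_mul_succ h
  · have heven := E1even_two_mul_succ (s := s) (show 2 * q ≤ m by omega)
    obtain ⟨N, hN⟩ : ∃ N, N = m - q + s := ⟨_, rfl⟩
    rw [E1, E1, if_neg (by omega), if_neg (by omega), Nat.add_sub_cancel,
      Nat.mul_div_cancel_left q two_pos, Nat.descFactorial_succ, Nat.ascFactorial_succ, ← add_assoc,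
      ← add_assoc, ← hN, show 2 * s + 2 * m + 2 - 2 * q = 2 * (N + 1) by omega]
    simp only [Nat.factorial_succ]
    push_cast
    field_simp
    linear_combination (q + s + 1 : ℚ) * heven

theorem selbergIntegral_mul_E1 (r s b : ℕ) :
    selbergIntegral r s b * (E1 r (r + b) 0 : ℝ) =
      selbergIntegral r 0 b * (E1 r (r + b) s : ℝ) := by
  induction s with
  | zero => rfl
  | succ s ih =>
    have hselberg := selbergIntegral_succ r s b
    have hE : (E1 r (r + b) (s + 1) * (2 * s + 2 * (r + b) + 2).descFactorial r : ℝ) =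
        E1 r (r + b) s * (2 * s + 2).ascFactorial r := by
      exact_mod_cast E1_succ (r.le_add_right b)
    have hpos : ((2 * s + 2 * (r + b) + 2).descFactorial r : ℝ) ≠ 0 :=
      Nat.cast_ne_zero.2 (Nat.descFactorial_pos.2 (by omega)).ne'
    rw [show 2 * s + 2 * b + 2 * r + 2 = 2 * s + 2 * (r + b) + 2 by ring] at hselberg
    refine mul_right_cancel₀ hpos ?_
    linear_combination (E1 r (r + b) 0 : ℝ) * hselberg + ((2 * s + 2).ascFactorial r : ℝ) * ih -
      selbergIntegral r 0 b * hE

end EFactor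

section TruncatedShapes

lemma sytCard_eq_of_mem_swap_iff {D D' : Finset (ℕ × ℕ)}
    (h : ∀ c : ℕ × ℕ, c ∈ D ↔ c.swap ∈ D') :
    sytCard D = sytCard D' := by
  let e : D ≃ D' := (Equiv.prodComm ℕ ℕ).subtypeEquiv h
  have hcard : #D = #D' := by simpa using Fintype.card_congr e
  refine card_equiv (e.arrowCongr (finCongr hcard)) fun T ↦ ?_
  have happly : e.arrowCongr (finCongr hcard) T = finCongr hcard ∘ T ∘ e.symm := rfl
  simp only [mem_filter, mem_univ, true_and, happly, EquivLike.comp_bijective,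
    EquivLike.bijective_comp]
  refine and_congr Iff.rfl ⟨fun hT c c' ↦ (hT (e.symm c) (e.symm c')).symm, fun hT c c' ↦ ?_⟩
  have hcell := hT (e c) (e c')
  simp only [Function.comp_apply, e.symm_apply_apply] at hcell
  exact hcell.symm

lemma diagConst_eq_mul (r s b : ℕ) :
    diagConst r s b = diagConst 0 s (r + b) * diagConst r 0 b := by
  have : (∏ t ∈ range (r + b), (t ! : ℝ)) ≠ 0 := by positivity
  simp only [diagConst, range_zero, prod_empty, zero_add, add_zero, one_mul]
  rw [show s + (r + b) = r + s + b by ring]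
  field_simp

lemma selbergIntegral_zero (a b : ℕ) : selbergIntegral 0 a b = 1 := by
  simp [selbergIntegral, selbergWeight, orderedSimplex_zero, Measure.volume_pi_eq_dirac isEmptyElim]

lemma filter_eq_truncRect (k s b : ℕ) :
    {c ∈ range (k + 1 + b) ×ˢ range (k + 1 + s) | c.2 < k + 1 + s - (k - c.1)} =
      truncRect (k + 1) s b := by
  ext c
  simp only [mem_truncRect, mem_filter, mem_product, mem_range]
  omega

lemma range_product_range_eq_truncRect (m s : ℕ) : range m ×ˢ range s = truncRect 0 s m := by
  ext c
  simp only [mem_truncRect, mem_product, mem_range]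
  omega

lemma sytCard_shifted_eq (r b : ℕ) :
    sytCard {c ∈ range r ×ˢ range (r + b) | c.1 ≤ c.2} = sytCard (truncRect r 0 b) := by
  refine sytCard_eq_of_mem_swap_iff fun c ↦ ?_
  simp only [mem_truncRect, mem_filter, mem_product, mem_range, Prod.fst_swap, Prod.snd_swap]
  omega

lemma card_truncRect_eq_add (r s b : ℕ) :
    #(truncRect r s b) = #(truncRect r 0 b) + #(truncRect 0 s (r + b)) := by
  have h₁ := card_truncRect_add_choose r s b
  have h₂ := card_truncRect_add_choose r 0 b
  have h₃ := card_truncRect_add_choose 0 s (r + b)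
  rw [Nat.choose_zero_succ] at h₃
  linarith

theorem sytCard_truncRect_mul_E1 (r s b : ℕ) :
    (sytCard (truncRect r s b) * E1 r (r + b) 0 : ℚ) =
      (#(truncRect r s b)).choose #(truncRect 0 s (r + b)) * sytCard (truncRect 0 s (r + b)) *
        sytCard (truncRect r 0 b) * E1 r (r + b) s := by
  have hchoose := Nat.add_choose_mul_factorial_mul_factorial #(truncRect r 0 b)
    #(truncRect 0 s (r + b))
  have hreal : (sytCard (truncRect r s b) * E1 r (r + b) 0 : ℝ) =
      (#(truncRect r s b)).choose #(truncRect 0 s (r + b)) * sytCard (truncRect 0 s (r + b)) *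
        sytCard (truncRect r 0 b) * E1 r (r + b) s := by
    rw [sytCard_truncRect, sytCard_truncRect, sytCard_truncRect, selbergIntegral_zero,
      diagConst_eq_mul r s b, card_truncRect_eq_add, ← hchoose]
    push_cast
    linear_combination ((#(truncRect r 0 b) + #(truncRect 0 s (r + b))).choose
      #(truncRect 0 s (r + b)) * (#(truncRect r 0 b))! * (#(truncRect 0 s (r + b)))! *
      diagConst 0 s (r + b) * diagConst r 0 b : ℝ) * selbergIntegral_mul_E1 r s b
  exact_mod_cast hreal

end TruncatedShapes

theorem stmt19_general (n m k : ℕ) (hkm : k < m) (hkn : k < n) :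
    (sytCard (((Finset.range m) ×ˢ (Finset.range n)).filter fun c =>
        c.2 < n - (k - c.1)) : ℚ) =
      ((m * n - (k + 1).choose 2).choose (m * (n - k - 1)) : ℚ) *
        (sytCard ((Finset.range m) ×ˢ (Finset.range (n - k - 1))) : ℚ) *
        (sytCard (((Finset.range (k + 1)) ×ˢ (Finset.range m)).filter fun c =>
          c.1 ≤ c.2) : ℚ) *
        E1 (k + 1) m (n - k - 1) / E1 (k + 1) m 0 := by
  obtain ⟨s, rfl⟩ := Nat.exists_eq_add_of_le (Nat.succ_le_of_lt hkn)
  obtain ⟨b, rfl⟩ := Nat.exists_eq_add_of_le (Nat.succ_le_of_lt hkm)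
  have hcard : (k + 1 + b) * (k + 1 + s) - (k + 1).choose 2 = #(truncRect (k + 1) s b) :=
    Nat.sub_eq_of_eq_add (card_truncRect_add_choose (k + 1) s b).symm
  have hcard_rect : (k + 1 + b) * s = #(truncRect 0 s (k + 1 + b)) := by
    simpa using (card_truncRect_add_choose 0 s (k + 1 + b)).symm
  rw [Nat.sub_sub, Nat.succ_eq_add_one, Nat.add_sub_cancel_left, hcard, hcard_rect,
    filter_eq_truncRect, range_product_range_eq_truncRect, sytCard_shifted_eq,
    eq_div_iff (E1_pos (Nat.le_add_right _ b)).ne', sytCard_truncRect_mul_E1]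

/-- the number of standard tableaux of the truncated shape `n^m \ δ_k`
(for `n ≤ m`) equals
`binom(mn - C(k+1,2), m(n-k-1)) · f_{(n-k-1)^m} · g_{(m,m-1,…,m-k)}
   · E_1(k+1,m,n-k-1)/E_1(k+1,m,0)`. -/
theorem stmt19 (n m k : ℕ) (hnm : n ≤ m) (hk : k < n) :
    (sytCard (((Finset.range m) ×ˢ (Finset.range n)).filter fun c =>
        c.2 < n - (k - c.1)) : ℚ) =
      ((m * n - (k + 1).choose 2).choose (m * (n - k - 1)) : ℚ) *
        (sytCard ((Finset.range m) ×ˢ (Finset.range (n - k - 1))) : ℚ) *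
        (sytCard (((Finset.range (k + 1)) ×ˢ (Finset.range m)).filter fun c =>
          c.1 ≤ c.2) : ℚ) *
        E1 (k + 1) m (n - k - 1) / E1 (k + 1) m 0 :=
  stmt19_general n m k (hk.trans_le hnm) hk
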